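/- Let s > 1, q ∈ [1,∞], let ω be an s-admissible weight on ℝ^d, and let f ∈ L¹(ℝ^d) have compact support. Then (∫_{ℝ^d} (|f̂(ξ)|·ω(ξ))^q dξ)^{1/q} < ∞ (essential supremum when q = ∞) if and only if WF_{FL^q_ω}(f) = ∅. -/

import Mathlib

open MeasureTheory Complex Set
open scoped ENNReal RealInnerProductSpace NNReal

noncomputable section

namespace Paper

variable {d : ℕ}

/-- The Fourier transform, normalized by `(2π)^{-d/2}`. -/
def FT (f : EuclideanSpace ℝ (Fin d) → ℂ) (ξ : EuclideanSpace ℝ (Fin d)) : ℂ :=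
  ((2 * Real.pi) ^ (-(d : ℝ) / 2) : ℝ) *
    ∫ x, f x * Complex.exp (-(⟪x, ξ⟫ : ℝ) * Complex.I)

/-- The short-time Fourier transform `V_φ f (x, ξ)`. -/
def STFT (φ f : EuclideanSpace ℝ (Fin d) → ℂ) (x ξ : EuclideanSpace ℝ (Fin d)) : ℂ :=
  ((2 * Real.pi) ^ (-(d : ℝ) / 2) : ℝ) *
    ∫ y, f y * (starRingEnd ℂ) (φ (y - x)) * Complex.exp (-(⟪ξ, y⟫ : ℝ) * Complex.I)

/-- A cone in `ℝ^d ∖ {0}`. -/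
def IsCone (Γ : Set (EuclideanSpace ℝ (Fin d))) : Prop :=
  (0 : EuclideanSpace ℝ (Fin d)) ∉ Γ ∧ ∀ ξ ∈ Γ, ∀ t : ℝ, 0 < t → t • ξ ∈ Γ

/-- An `s`-cutoff: smooth, compactly supported, with Fourier transform decaying faster
than every `exp (-N |ξ|^{1/s})`. -/
def IsSCutoff (s : ℝ) (φ : EuclideanSpace ℝ (Fin d) → ℂ) : Prop :=
  ContDiff ℝ (⊤ : ℕ∞) φ ∧ HasCompactSupport φ ∧
    ∀ N : ℝ, 0 < N → ∃ C : ℝ, 0 < C ∧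
      ∀ ξ, ‖FT φ ξ‖ ≤ C * Real.exp (-N * ‖ξ‖ ^ (1 / s))

/-- An `s`-admissible weight: positive, measurable, and moderate with respect to an even
submultiplicative weight of sub-exponential growth of order `1/s`. -/
def IsSAdmissible (s : ℝ) (ω : EuclideanSpace ℝ (Fin d) → ℝ) : Prop :=
  Measurable ω ∧ (∀ x, 0 < ω x) ∧
    ∃ v : EuclideanSpace ℝ (Fin d) → ℝ, Measurable v ∧ (∀ x, 0 < v x) ∧
      (∀ x, v (-x) = v x) ∧ (∀ x y, v (x + y) ≤ v x * v y) ∧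
      ∃ C₀ k₀ C₁ : ℝ, 0 < C₀ ∧ 0 < k₀ ∧ 0 < C₁ ∧
        (∀ ξ, v ξ ≤ C₀ * Real.exp (k₀ * ‖ξ‖ ^ (1 / s))) ∧
        ∀ x y, ω (x + y) ≤ C₁ * v x * ω y

/-- The Fourier–Lebesgue seminorm `( ∫_Γ (|f̂| ω)^q )^{1/q}` (ess-sup when `q = ∞`). -/
def FLSemi (ω : EuclideanSpace ℝ (Fin d) → ℝ) (q : ℝ≥0∞)
    (f : EuclideanSpace ℝ (Fin d) → ℂ) (Γ : Set (EuclideanSpace ℝ (Fin d))) : ℝ≥0∞ :=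
  eLpNorm (fun ξ => ‖FT f ξ‖ * ω ξ) q (volume.restrict Γ)

/-- The Fourier–Lebesgue wave-front set `WF_{FL^q_ω} f`. -/
def WF_FL (s : ℝ) (q : ℝ≥0∞) (ω : EuclideanSpace ℝ (Fin d) → ℝ)
    (f : EuclideanSpace ℝ (Fin d) → ℂ) :
    Set (EuclideanSpace ℝ (Fin d) × EuclideanSpace ℝ (Fin d)) :=
  {z | z.2 ≠ 0 ∧ ∀ φ : EuclideanSpace ℝ (Fin d) → ℂ, IsSCutoff s φ → φ z.1 ≠ 0 →
    ∀ Γ : Set (EuclideanSpace ℝ (Fin d)), IsOpen Γ → IsCone Γ → z.2 ∈ Γ →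
      FLSemi ω q (fun x => φ x * f x) Γ = ∞}

/-- The `s`-wave-front set `WF_s f`. -/
def WFs (s : ℝ) (f : EuclideanSpace ℝ (Fin d) → ℂ) :
    Set (EuclideanSpace ℝ (Fin d) × EuclideanSpace ℝ (Fin d)) :=
  {z | z.2 ≠ 0 ∧ ¬ ∃ φ : EuclideanSpace ℝ (Fin d) → ℂ, IsSCutoff s φ ∧
    (∃ U : Set (EuclideanSpace ℝ (Fin d)), IsOpen U ∧ z.1 ∈ U ∧ ∀ x ∈ U, φ x = 1) ∧
    ∃ Γ : Set (EuclideanSpace ℝ (Fin d)), IsOpen Γ ∧ IsCone Γ ∧ z.2 ∈ Γ ∧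
      ∃ C k : ℝ, 0 < C ∧ 0 < k ∧
        ∀ ξ ∈ Γ, ‖FT (fun x => φ x * f x) ξ‖ ≤ C * Real.exp (-k * ‖ξ‖ ^ (1 / s))}

/-- The mixed modulation-space seminorm
`( ∫_Γ ( ∫ |V_g F(x,ξ)|^p dx )^{q/p} ω(ξ)^q dξ )^{1/q}` with the usual
ess-sup interpretations for `p = ∞` or `q = ∞`. -/
def ModSemi (g F : EuclideanSpace ℝ (Fin d) → ℂ) (ω : EuclideanSpace ℝ (Fin d) → ℝ)
    (p q : ℝ≥0∞) (Γ : Set (EuclideanSpace ℝ (Fin d))) : ℝ≥0∞ :=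
  if q = ∞ then
    essSup (fun ξ => eLpNorm (fun x => STFT g F x ξ) p volume * ENNReal.ofReal (ω ξ))
      (volume.restrict Γ)
  else
    (∫⁻ ξ in Γ, (eLpNorm (fun x => STFT g F x ξ) p volume * ENNReal.ofReal (ω ξ)) ^ q.toReal) ^
      (1 / q.toReal)

/-- The modulation wave-front set `WF_{M^{p,q}_ω} f`, with window `g`. -/
def WF_M (s : ℝ) (p q : ℝ≥0∞) (ω : EuclideanSpace ℝ (Fin d) → ℝ)
    (g f : EuclideanSpace ℝ (Fin d) → ℂ) :
    Set (EuclideanSpace ℝ (Fin d) × EuclideanSpace ℝ (Fin d)) :=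
  {z | z.2 ≠ 0 ∧ ∀ φ : EuclideanSpace ℝ (Fin d) → ℂ, IsSCutoff s φ → φ z.1 ≠ 0 →
    ∀ Γ : Set (EuclideanSpace ℝ (Fin d)), IsOpen Γ → IsCone Γ → z.2 ∈ Γ →
      ModSemi g (fun x => φ x * f x) ω p q Γ = ∞}

/-- Reinterpret a plain vector as a point of Euclidean space. -/
def toE (x : Fin d → ℝ) : EuclideanSpace ℝ (Fin d) :=
  (EuclideanSpace.equiv (Fin d) ℝ).symm x

/-- The point `A k` of the lattice `A(ℤ^d)`. -/
def latPt (A : Matrix (Fin d) (Fin d) ℝ) (k : Fin d → ℤ) : EuclideanSpace ℝ (Fin d) :=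
  toE (A.mulVec fun i => (k i : ℝ))

/-- The point `c (Aᵀ)⁻¹ k` of the dual lattice `c (Aᵀ)⁻¹(ℤ^d)`. -/
def dualLatPt (A : Matrix (Fin d) (Fin d) ℝ) (c : ℝ) (k : Fin d → ℤ) :
    EuclideanSpace ℝ (Fin d) :=
  toE (c • (A.transpose⁻¹.mulVec fun i => (k i : ℝ)))

/-- The parallelepiped `x₁ + A([0,1]^d)`. -/
def lattPara (A : Matrix (Fin d) (Fin d) ℝ) (x₁ : EuclideanSpace ℝ (Fin d)) :
    Set (EuclideanSpace ℝ (Fin d)) :=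
  (fun t : Fin d → ℝ => x₁ + toE (A.mulVec t)) '' (Set.univ.pi fun _ => Set.Icc 0 1)

/-- The adjoint short-time Fourier transform `V*_φ F`. -/
def VStar (φ : EuclideanSpace ℝ (Fin d) → ℂ)
    (F : EuclideanSpace ℝ (Fin d) × EuclideanSpace ℝ (Fin d) → ℂ)
    (t : EuclideanSpace ℝ (Fin d)) : ℂ :=
  ((2 * Real.pi) ^ (-(d : ℝ) / 2) : ℝ) *
    ∫ z : EuclideanSpace ℝ (Fin d) × EuclideanSpace ℝ (Fin d),
      F z * Complex.exp ((⟪z.2, t⟫ : ℝ) * Complex.I) * φ (t - z.1)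

/-!
Multiplication by a cutoff `ψ` preserves finiteness of the weighted Fourier–Lebesgue seminorm, and
it even does so from a cone `Γ` to a set of frequencies `ξ` with `δ |ξ| ≤ |ξ - η|` for all `η ∉ Γ`:
the frequencies `η ∈ Γ` contribute a convolution with `|ψ̂| exp (k |·| ^ (1 / s))`, to which Young's
inequality applies, and for the others the decay of `ψ̂` beats the growth of the weight. Taking for
`Γ` the whole space gives one implication.

If conversely the wave-front set is empty, then near each `x₀` finitely many cones of regularity
cover all directions, and the product `Φ` of the corresponding cutoffs satisfies `Φ x₀ ≠ 0` and
makes all `ψ Φ f` have finite seminorm. By a Wiener-type lemma there is a cutoff `ψ` with `ψ Φ = 1`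
near `x₀`. Two localizing cutoffs `θ`, `θ'` of this kind are merged by
`1 - (1 - θ) (1 - θ') = θ + θ' - θ θ'`, and compactness of the support of `f` concludes.

The Wiener-type lemma inverts `1 - g` when `∫ |ĝ|` is small. The decay of the Fourier transform of
`ψ / (1 - g)` is measured by the subadditive weights `(R + |ξ|) ^ (1 / s) - R ^ (1 / s)`, which are
comparable to `|ξ| ^ (1 / s)` but for which the weighted norm of `g` tends to the unweighted one as
`R → ∞`. Cutoffs equal to `1` near a point arise by mollifying with the law of a random series
`∑ (j + 1) ^ (-σ) X_j`, `1 < σ < s`, of bounded independent variables.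
-/

open Filter Topology
open scoped FourierTransform

local notation "ℝᵈ" => EuclideanSpace ℝ (Fin d)

theorem concaveOn_add_add_le {S : Set ℝ} {f : ℝ → ℝ} (hf : ConcaveOn ℝ S f) {x a b : ℝ}
    (hx : x ∈ S) (hxab : x + (a + b) ∈ S) (ha : 0 ≤ a) (hb : 0 ≤ b) :
    f x + f (x + (a + b)) ≤ f (x + a) + f (x + b) := by
  rcases (add_nonneg ha hb).eq_or_lt with hab | hab
  · obtain ⟨rfl, rfl⟩ : a = 0 ∧ b = 0 := ⟨by linarith, by linarith⟩
    simp
  have ha' : 0 ≤ a / (a + b) := by positivity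
  have hb' : 0 ≤ b / (a + b) := by positivity
  have h₁ := hf.2 hx hxab hb' ha' (by field_simp; ring)
  have h₂ := hf.2 hx hxab ha' hb' (by field_simp)
  simp only [smul_eq_mul] at h₁ h₂
  rw [show b / (a + b) * x + a / (a + b) * (x + (a + b)) = x + a by field_simp; ring] at h₁
  rw [show a / (a + b) * x + b / (a + b) * (x + (a + b)) = x + b by field_simp; ring] at h₂
  have hsum : b / (a + b) * f x + a / (a + b) * f (x + (a + b)) +
      (a / (a + b) * f x + b / (a + b) * f (x + (a + b))) = f x + f (x + (a + b)) := by
    field_simp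
    ring
  linarith

/-- The shifted power `(R + t) ^ p - R ^ p`. For `0 ≤ p ≤ 1` and `0 ≤ t` it is subadditive in `t`
and differs from `t ^ p` by at most `R ^ p`, while for fixed `t` it tends to `0` as `R → ∞`. -/
def shiftedRpow (p R t : ℝ) : ℝ := (R + t) ^ p - R ^ p

section ShiftedRpow

variable {p R t : ℝ}

theorem shiftedRpow_mono (hp : 0 ≤ p) (hR : 0 ≤ R) {a b : ℝ} (ha : 0 ≤ a) (hab : a ≤ b) :
    shiftedRpow p R a ≤ shiftedRpow p R b :=
  sub_le_sub_right (Real.rpow_le_rpow (add_nonneg hR ha) (by gcongr) hp) _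

theorem shiftedRpow_nonneg (hp : 0 ≤ p) (hR : 0 ≤ R) (ht : 0 ≤ t) : 0 ≤ shiftedRpow p R t :=
  sub_nonneg.2 (Real.rpow_le_rpow hR (by linarith) hp)

theorem shiftedRpow_add_le (hp : 0 ≤ p) (hp₁ : p ≤ 1) (hR : 0 ≤ R) {a b : ℝ} (ha : 0 ≤ a)
    (hb : 0 ≤ b) : shiftedRpow p R (a + b) ≤ shiftedRpow p R a + shiftedRpow p R b := by
  have := concaveOn_add_add_le (Real.concaveOn_rpow hp hp₁) (mem_Ici.2 hR)
    (mem_Ici.2 (by positivity : 0 ≤ R + (a + b))) ha hb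
  unfold shiftedRpow
  linarith

theorem rpow_sub_rpow_le_shiftedRpow (hp : 0 ≤ p) (hR : 0 ≤ R) (ht : 0 ≤ t) :
    t ^ p - R ^ p ≤ shiftedRpow p R t :=
  sub_le_sub_right (Real.rpow_le_rpow ht (by linarith) hp) _

theorem shiftedRpow_le_rpow (hp : 0 ≤ p) (hp₁ : p ≤ 1) (hR : 0 ≤ R) (ht : 0 ≤ t) :
    shiftedRpow p R t ≤ t ^ p :=
  sub_le_iff_le_add'.2 (Real.rpow_add_le_add_rpow hR ht hp hp₁)

theorem tendsto_shiftedRpow_atTop (hp : 0 ≤ p) (hp₁ : p < 1) (ht : 0 ≤ t) :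
    Tendsto (fun R => shiftedRpow p R t) atTop (𝓝 0) := by
  have hlim : Tendsto (fun R : ℝ => p * t * R ^ (-(1 - p))) atTop (𝓝 0) := by
    simpa using (tendsto_rpow_neg_atTop (sub_pos.2 hp₁)).const_mul (p * t)
  refine squeeze_zero' ?_ ?_ hlim
  · filter_upwards [eventually_ge_atTop 0] with R hR using shiftedRpow_nonneg hp hR ht
  filter_upwards [eventually_gt_atTop 0] with R hR
  have bernoulli : (1 + t / R) ^ p ≤ 1 + p * (t / R) :=
    rpow_one_add_le_one_add_mul_self (by linarith [div_nonneg ht hR.le]) hp hp₁.le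
  calc shiftedRpow p R t = R ^ p * ((1 + t / R) ^ p - 1) := by
        rw [mul_sub_one, ← Real.mul_rpow hR.le (by positivity), mul_one_add,
          mul_div_cancel₀ _ hR.ne', shiftedRpow]
    _ ≤ R ^ p * (p * (t / R)) := by gcongr; linarith
    _ = p * t * R ^ (-(1 - p)) := by
        rw [neg_sub, Real.rpow_sub hR, Real.rpow_one]
        ring

theorem shiftedRpow_norm_le_add {E : Type*} [SeminormedAddCommGroup E] (hp : 0 ≤ p) (hp₁ : p ≤ 1)
    (hR : 0 ≤ R) (x y : E) :
    shiftedRpow p R ‖x‖ ≤ shiftedRpow p R ‖y‖ + shiftedRpow p R ‖x - y‖ :=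
  (shiftedRpow_mono hp hR (norm_nonneg x) (by linarith [norm_sub_norm_le x y])).trans
    (shiftedRpow_add_le hp hp₁ hR (norm_nonneg y) (norm_nonneg (x - y)))

theorem continuous_shiftedRpow_norm {E : Type*} [SeminormedAddCommGroup E] (hp : 0 ≤ p) (R : ℝ) :
    Continuous fun x : E => shiftedRpow p R ‖x‖ :=
  ((continuous_const.add continuous_norm).rpow_const fun _ => Or.inr hp).sub continuous_const

end ShiftedRpow

theorem exists_mul_rpow_le_mul_rpow_add {p p' : ℝ} (hp : 0 ≤ p) (hpp' : p < p') {N c : ℝ}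
    (hN : 0 ≤ N) (hc : 0 < c) : ∃ B : ℝ, ∀ r : ℝ, 0 ≤ r → N * r ^ p ≤ c * r ^ p' + B := by
  set R : ℝ := (N / c) ^ (p' - p)⁻¹ with hR
  have hR₀ : 0 ≤ R := by positivity
  refine ⟨N * R ^ p, fun r hr => ?_⟩
  rcases le_or_gt r R with h | h
  · have hmono : r ^ p ≤ R ^ p := Real.rpow_le_rpow hr h hp
    have : 0 ≤ c * r ^ p' := by positivity
    nlinarith
  · have hr₀ : 0 < r := hR₀.trans_lt h
    have hNr : N ≤ c * r ^ (p' - p) := by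
      have := Real.rpow_le_rpow hR₀ h.le (sub_pos.2 hpp').le
      rw [hR, Real.rpow_inv_rpow (by positivity) (sub_pos.2 hpp').ne', div_le_iff₀ hc] at this
      linarith
    calc N * r ^ p ≤ c * r ^ (p' - p) * r ^ p := by gcongr
      _ = c * r ^ p' := by rw [mul_assoc, ← Real.rpow_add hr₀, sub_add_cancel]
      _ ≤ c * r ^ p' + N * R ^ p := le_add_of_nonneg_right (by positivity)

section Decay

variable {E : Type*} [NormedAddCommGroup E]

theorem norm_rpow_le_add {p : ℝ} (hp : 0 ≤ p) (hp₁ : p ≤ 1) (x y : E) :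
    ‖x‖ ^ p ≤ ‖y‖ ^ p + ‖x - y‖ ^ p :=
  (Real.rpow_le_rpow (norm_nonneg x) (norm_le_norm_add_norm_sub' x y) hp).trans
    (Real.rpow_add_le_add_rpow (norm_nonneg _) (norm_nonneg _) hp hp₁)

@[fun_prop]
theorem continuous_exp_mul_norm_rpow {p : ℝ} (hp : 0 ≤ p) (k : ℝ) :
    Continuous fun x : E => Real.exp (k * ‖x‖ ^ p) :=
  Real.continuous_exp.comp (continuous_const.mul (continuous_norm.rpow_const fun _ => Or.inr hp))

variable [NormedSpace ℝ E] [FiniteDimensional ℝ E] [MeasurableSpace E] [BorelSpace E]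
  (μ : Measure E) [μ.IsAddHaarMeasure]

theorem integrable_exp_neg_mul_norm_rpow {p k : ℝ} (hp : 0 < p) (hk : 0 < k) :
    Integrable (fun x : E => Real.exp (-k * ‖x‖ ^ p)) μ := by
  rcases subsingleton_or_nontrivial E with hE | hE
  · exact (continuous_exp_mul_norm_rpow hp.le (-k)).integrable_of_hasCompactSupport
      (HasCompactSupport.of_compactSpace _)
  · rw [integrable_fun_norm_addHaar (μ := μ) (f := fun t => Real.exp (-k * t ^ p))]
    have hdim : (-1 : ℝ) < (Module.finrank ℝ E - 1 : ℕ) :=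
      neg_one_lt_zero.trans_le (Nat.cast_nonneg _)
    simpa only [Real.rpow_natCast, smul_eq_mul] using
      integrableOn_rpow_mul_exp_neg_mul_rpow hdim hp hk

theorem memLp_exp_neg_mul_norm_rpow {p k : ℝ} (hp : 0 < p) (hk : 0 < k) {q : ℝ≥0∞} (hq : 1 ≤ q) :
    MemLp (fun x : E => Real.exp (-k * ‖x‖ ^ p)) q μ := by
  have hmeas := (integrable_exp_neg_mul_norm_rpow μ hp hk).aestronglyMeasurable
  rcases eq_or_ne q ∞ with rfl | hq_top
  · refine memLp_top_of_bound hmeas 1 (Eventually.of_forall fun x => ?_)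
    rw [Real.norm_eq_abs, Real.abs_exp, Real.exp_le_one_iff, neg_mul, neg_nonpos]
    positivity
  · have hq₀ : q ≠ 0 := (zero_lt_one.trans_le hq).ne'
    rw [← integrable_norm_rpow_iff hmeas hq₀ hq_top]
    refine (integrable_exp_neg_mul_norm_rpow μ hp
      (mul_pos (ENNReal.toReal_pos hq₀ hq_top) hk)).congr
      (Eventually.of_forall fun x => ?_)
    simp only [Real.norm_eq_abs, Real.abs_exp, ← Real.exp_mul]
    ring_nf

end Decay

section Young

theorem rpow_lintegral_le_lintegral_rpow_mul {α : Type*} [MeasurableSpace α] (μ : Measure α)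
    {f : α → ℝ≥0∞} (hf : AEMeasurable f μ) {r : ℝ} (hr : 1 ≤ r) :
    (∫⁻ x, f x ∂μ) ^ r ≤ (∫⁻ x, f x ^ r ∂μ) * μ univ ^ (r - 1) := by
  have hr₀ : 0 < r := zero_lt_one.trans_le hr
  have h := eLpNorm'_le_eLpNorm'_mul_rpow_measure_univ zero_lt_one hr hf.aestronglyMeasurable
  simp only [eLpNorm', enorm_eq_self, ENNReal.rpow_one, div_one] at h
  calc (∫⁻ x, f x ∂μ) ^ r
      ≤ ((∫⁻ x, f x ^ r ∂μ) ^ (1 / r) * μ univ ^ (1 - 1 / r)) ^ r := by gcongr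
    _ = (∫⁻ x, f x ^ r ∂μ) * μ univ ^ (r - 1) := by
        rw [ENNReal.mul_rpow_of_nonneg _ _ hr₀.le, ← ENNReal.rpow_mul, ← ENNReal.rpow_mul,
          one_div_mul_cancel hr₀.ne', ENNReal.rpow_one, sub_mul, one_mul,
          one_div_mul_cancel hr₀.ne']

variable {G : Type*} [AddGroup G] [MeasurableSpace G] [MeasurableAdd₂ G] [MeasurableNeg G]
  {μ : Measure G} [μ.IsAddLeftInvariant] [SFinite μ] {f g : G → ℝ≥0∞}

theorem lintegral_rpow_lconvolution_le (hf : Measurable f) (hg : Measurable g) {r : ℝ}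
    (hr : 1 ≤ r) :
    ∫⁻ x, (f ⋆ₗ[μ] g) x ^ r ∂μ ≤ (∫⁻ y, f y ∂μ) ^ r * ∫⁻ x, g x ^ r ∂μ := by
  set A := ∫⁻ y, f y ∂μ
  have jensen (x : G) : (f ⋆ₗ[μ] g) x ^ r ≤ (∫⁻ y, f y * g (-y + x) ^ r ∂μ) * A ^ (r - 1) := by
    have hgx : Measurable fun y => g (-y + x) := by fun_prop
    have h := rpow_lintegral_le_lintegral_rpow_mul (μ.withDensity f) hgx.aemeasurable hr
    rwa [lintegral_withDensity_eq_lintegral_mul _ hf hgx,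
      lintegral_withDensity_eq_lintegral_mul _ hf (hgx.pow_const r),
      withDensity_apply _ MeasurableSet.univ, Measure.restrict_univ] at h
  have hmeas : Measurable (Function.uncurry fun x y => f y * g (-y + x) ^ r) := by
    unfold Function.uncurry
    fun_prop
  have hmeas_inner : Measurable fun x => ∫⁻ y, f y * g (-y + x) ^ r ∂μ :=
    hmeas.lintegral_prod_right'
  calc ∫⁻ x, (f ⋆ₗ[μ] g) x ^ r ∂μ
      ≤ ∫⁻ x, (∫⁻ y, f y * g (-y + x) ^ r ∂μ) * A ^ (r - 1) ∂μ := lintegral_mono jensen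
    _ = (∫⁻ y, ∫⁻ x, f y * g (-y + x) ^ r ∂μ ∂μ) * A ^ (r - 1) := by
        rw [lintegral_mul_const _ hmeas_inner, lintegral_lintegral_swap hmeas.aemeasurable]
    _ = (∫⁻ y, f y * ∫⁻ x, g x ^ r ∂μ ∂μ) * A ^ (r - 1) := by
        congr 2 with y
        rw [lintegral_const_mul _ (by fun_prop), lintegral_add_left_eq_self (fun x => g x ^ r)]
    _ = A ^ r * ∫⁻ x, g x ^ r ∂μ := by
        rw [lintegral_mul_const _ hf, mul_right_comm]
        congr 1
        conv_rhs => rw [← add_sub_cancel 1 r,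
          ENNReal.rpow_add_of_nonneg _ _ zero_le_one (sub_nonneg.2 hr), ENNReal.rpow_one]

theorem eLpNorm_lconvolution_le (hf : Measurable f) (hg : Measurable g) [μ.IsNegInvariant]
    {q : ℝ≥0∞} (hq : 1 ≤ q) :
    eLpNorm (f ⋆ₗ[μ] g) q μ ≤ (∫⁻ y, f y ∂μ) * eLpNorm g q μ := by
  rcases eq_or_ne q ∞ with rfl | hq_top
  · refine eLpNormEssSup_le_of_ae_enorm_bound (Eventually.of_forall fun x => ?_)
    have hg_le : ∀ᵐ y ∂μ, g (-y + x) ≤ eLpNorm g ∞ μ := by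
      have hpres := (Measure.measurePreserving_neg μ).comp (measurePreserving_add_left μ (-x))
      refine (hpres.quasiMeasurePreserving.ae (ae_le_eLpNormEssSup (f := g))).mono fun y hy => ?_
      simpa using hy
    calc (f ⋆ₗ[μ] g) x ≤ ∫⁻ y, f y * eLpNorm g ∞ μ ∂μ := by
          refine lintegral_mono_ae ?_
          filter_upwards [hg_le] with y hy
          gcongr
      _ = (∫⁻ y, f y ∂μ) * eLpNorm g ∞ μ := lintegral_mul_const _ hf
  · have hq₀ : q ≠ 0 := (zero_lt_one.trans_le hq).ne'
    have hr : 1 ≤ q.toReal := ENNReal.toReal_one ▸ ENNReal.toReal_mono hq_top hq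
    simp only [eLpNorm_eq_lintegral_rpow_enorm_toReal hq₀ hq_top, enorm_eq_self]
    calc (∫⁻ x, (f ⋆ₗ[μ] g) x ^ q.toReal ∂μ) ^ (1 / q.toReal)
        ≤ ((∫⁻ y, f y ∂μ) ^ q.toReal * ∫⁻ x, g x ^ q.toReal ∂μ) ^ (1 / q.toReal) := by
          gcongr
          exact lintegral_rpow_lconvolution_le hf hg hr
      _ = (∫⁻ y, f y ∂μ) * (∫⁻ x, g x ^ q.toReal ∂μ) ^ (1 / q.toReal) := by
          rw [ENNReal.mul_rpow_of_nonneg _ _ (by positivity), ← ENNReal.rpow_mul,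
            mul_one_div_cancel (by positivity), ENNReal.rpow_one]

end Young

section FourierTransform

/-- The normalizing constant `(2π) ^ (-d / 2)` of the Fourier transform `FT` on `ℝᵈ`. -/
def ftConst (d : ℕ) : ℝ := (2 * Real.pi) ^ (-(d : ℝ) / 2)

theorem ftConst_pos (d : ℕ) : 0 < ftConst d := Real.rpow_pos_of_pos (by positivity) _

/-- The character `exp (-i ⟨x, ξ⟩)`, the kernel of the Fourier transform. -/
def planeWave (x ξ : ℝᵈ) : ℂ := Complex.exp (-(⟪x, ξ⟫ : ℝ) * Complex.I)

@[fun_prop]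
theorem continuous_planeWave {X : Type*} [TopologicalSpace X] {f g : X → ℝᵈ} (hf : Continuous f)
    (hg : Continuous g) : Continuous fun x => planeWave (f x) (g x) := by
  unfold planeWave
  fun_prop

theorem norm_planeWave (x ξ : ℝᵈ) : ‖planeWave x ξ‖ = 1 := by
  rw [planeWave, ← Complex.ofReal_neg, Complex.norm_exp_ofReal_mul_I]

theorem planeWave_add_left (x y ξ : ℝᵈ) :
    planeWave (x + y) ξ = planeWave x ξ * planeWave y ξ := by
  rw [planeWave, planeWave, planeWave, ← Complex.exp_add, inner_add_left]
  push_cast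
  ring_nf

theorem planeWave_add_right (x ξ η : ℝᵈ) :
    planeWave x (ξ + η) = planeWave x ξ * planeWave x η := by
  rw [planeWave, planeWave, planeWave, ← Complex.exp_add, inner_add_right]
  push_cast
  ring_nf

theorem planeWave_smul_left (a : ℝ) (x ξ : ℝᵈ) : planeWave (a • x) ξ = planeWave x (a • ξ) := by
  rw [planeWave, planeWave, real_inner_smul_left, real_inner_smul_right]

theorem FT_eq (f : ℝᵈ → ℂ) (ξ : ℝᵈ) : FT f ξ = ftConst d * ∫ x, f x * planeWave x ξ := rfl

theorem FT_eq_fourier (f : ℝᵈ → ℂ) (ξ : ℝᵈ) :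
    FT f ξ = ftConst d * 𝓕 f ((2 * Real.pi)⁻¹ • ξ) := by
  rw [FT_eq, Real.fourier_eq']
  congr 2 with x
  rw [smul_eq_mul, mul_comm, planeWave, real_inner_smul_right,
    show -2 * Real.pi * ((2 * Real.pi)⁻¹ * ⟪x, ξ⟫) = -⟪x, ξ⟫ by field_simp, Complex.ofReal_neg]

theorem fourier_eq_FT (f : ℝᵈ → ℂ) (w : ℝᵈ) :
    𝓕 f w = (ftConst d : ℂ)⁻¹ * FT f ((2 * Real.pi) • w) := by
  rw [FT_eq_fourier, inv_smul_smul₀ (by positivity), inv_mul_cancel_left₀]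
  exact_mod_cast (ftConst_pos d).ne'

variable {f g u φ : EuclideanSpace ℝ (Fin d) → ℂ}

theorem continuous_FT (hf : Integrable f) : Continuous (FT f) := by
  have h : Continuous (𝓕 f) := VectorFourier.fourierIntegral_continuous
    Real.continuous_fourierChar (by exact continuous_inner) hf
  rw [show FT f = fun ξ => _ from funext (FT_eq_fourier f)]
  fun_prop

theorem norm_ftConst_mul (z : ℂ) : ‖(ftConst d : ℂ) * z‖ = ftConst d * ‖z‖ := by
  rw [norm_mul, Complex.norm_real, Real.norm_of_nonneg (ftConst_pos d).le]

theorem norm_FT_le (f : ℝᵈ → ℂ) (ξ : ℝᵈ) : ‖FT f ξ‖ ≤ ftConst d * ∫ x, ‖f x‖ := by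
  rw [FT_eq, norm_ftConst_mul]
  gcongr
  · exact (ftConst_pos d).le
  · simpa only [norm_mul, norm_planeWave, mul_one] using
      norm_integral_le_integral_norm fun x => f x * planeWave x ξ

theorem integrable_mul_planeWave (hf : Integrable f) (ξ : ℝᵈ) :
    Integrable fun x => f x * planeWave x ξ :=
  hf.mul_bdd (by fun_prop) (Eventually.of_forall fun x => (norm_planeWave x ξ).le)

theorem FT_add (hf : Integrable f) (hg : Integrable g) : FT (f + g) = FT f + FT g := by
  ext ξ
  simp only [FT_eq, Pi.add_apply, add_mul]
  rw [integral_add (integrable_mul_planeWave hf ξ) (integrable_mul_planeWave hg ξ), mul_add]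

theorem FT_smul (a : ℂ) (f : ℝᵈ → ℂ) : FT (a • f) = a • FT f := by
  ext ξ
  simp only [FT_eq, Pi.smul_apply, smul_eq_mul, mul_assoc, integral_const_mul]
  ring

theorem FT_sub (hf : Integrable f) (hg : Integrable g) : FT (f - g) = FT f - FT g := by
  rw [sub_eq_add_neg, ← neg_one_smul ℂ, FT_add hf (hg.smul _), FT_smul, neg_one_smul,
    ← sub_eq_add_neg]

theorem FT_comp_sub (f : ℝᵈ → ℂ) (x₀ ξ : ℝᵈ) :
    FT (fun x => f (x - x₀)) ξ = planeWave x₀ ξ * FT f ξ := by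
  rw [FT_eq, FT_eq, mul_left_comm (planeWave x₀ ξ), ← integral_const_mul (planeWave x₀ ξ),
    ← integral_add_right_eq_self _ x₀]
  congr 2 with x
  rw [add_sub_cancel_right, planeWave_add_left]
  ring

theorem FT_comp_smul (f : ℝᵈ → ℂ) {a : ℝ} (ha : a ≠ 0) (ξ : ℝᵈ) :
    FT (fun x => f (a • x)) ξ = (|(a ^ d)⁻¹| : ℝ) * FT f (a⁻¹ • ξ) := by
  have h (x : ℝᵈ) : f (a • x) * planeWave x ξ = f (a • x) * planeWave (a • x) (a⁻¹ • ξ) := by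
    rw [planeWave_smul_left, smul_inv_smul₀ ha]
  simp only [FT_eq, h]
  rw [Measure.integral_comp_smul volume fun x : ℝᵈ => f x * planeWave x (a⁻¹ • ξ),
    finrank_euclideanSpace_fin, Complex.real_smul, mul_left_comm]

theorem FT_inversion (hφc : Continuous φ) (hφ : Integrable φ) (hFφ : Integrable (FT φ)) (x : ℝᵈ) :
    φ x = ftConst d * ∫ η, FT φ η * planeWave x (-η) := by
  have hpi : (0 : ℝ) < 2 * Real.pi := by positivity
  have hF𝓕 : Integrable (𝓕 φ) := by
    rw [show 𝓕 φ = fun w => _ from funext (fourier_eq_FT φ)]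
    exact (hFφ.comp_smul hpi.ne').const_mul _
  have hintegrand (v : ℝᵈ) : Complex.exp (↑(2 * Real.pi * ⟪v, x⟫) * I) • 𝓕 φ v =
      (ftConst d : ℂ)⁻¹ * (FT φ ((2 * Real.pi) • v) * planeWave x (-((2 * Real.pi) • v))) := by
    rw [smul_eq_mul, fourier_eq_FT, planeWave, inner_neg_right, real_inner_smul_right,
      real_inner_comm, Complex.ofReal_neg, neg_neg]
    ring
  have hconst : ((2 * Real.pi) ^ d)⁻¹ = ftConst d * ftConst d := by
    rw [ftConst, ← Real.rpow_add hpi, ← Real.rpow_natCast, ← Real.rpow_neg hpi.le]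
    ring_nf
  have hc₀ : (ftConst d : ℂ) ≠ 0 := by exact_mod_cast (ftConst_pos d).ne'
  rw [← hφ.fourierInv_fourier_eq hF𝓕 hφc.continuousAt, Real.fourierInv_eq']
  simp only [hintegrand]
  rw [integral_const_mul, Measure.integral_comp_smul_of_nonneg volume
      (fun η : ℝᵈ => FT φ η * planeWave x (-η)) _ (hR := hpi.le),
    finrank_euclideanSpace_fin, hconst, Complex.real_smul]
  push_cast
  field_simp

theorem FT_mul (hφc : Continuous φ) (hφ : Integrable φ) (hFφ : Integrable (FT φ))
    (hu : Integrable u) (ξ : ℝᵈ) : FT (φ * u) ξ = ftConst d * ∫ η, FT φ η * FT u (ξ - η) := by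
  have hint : Integrable (Function.uncurry fun x η => u x * FT φ η * planeWave x (ξ - η))
      (volume.prod volume) :=
    (hu.mul_prod hFφ).mul_bdd (by fun_prop)
      (Eventually.of_forall fun z => (norm_planeWave z.1 (ξ - z.2)).le)
  have hφu (x : ℝᵈ) : (φ * u) x * planeWave x ξ =
      ftConst d * ∫ η, u x * FT φ η * planeWave x (ξ - η) := by
    rw [Pi.mul_apply, FT_inversion hφc hφ hFφ x, mul_assoc, mul_assoc, ← integral_mul_const]
    congr 2 with η
    rw [sub_eq_add_neg, planeWave_add_right]
    ring
  rw [FT_eq]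
  simp only [hφu]
  rw [integral_const_mul, integral_integral_swap hint, ← integral_const_mul (ftConst d : ℂ)]
  congr 2 with η
  rw [FT_eq u, mul_left_comm (FT φ η), ← integral_const_mul (FT φ η)]
  simp only [mul_assoc, mul_left_comm (FT φ η)]

end FourierTransform

section WienerNorm

/-- The weighted Wiener norm `(2π) ^ (-d / 2) ∫ |ĝ(η)| exp (w η) dη`. For subadditive `w` it is the
operator norm bound for multiplication by `g` on the functions `u` with `û = O(exp (-w))`. -/
def wienerNorm (w : ℝᵈ → ℝ) (g : ℝᵈ → ℂ) : ℝ := ftConst d * ∫ η, ‖FT g η‖ * Real.exp (w η)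

theorem wienerNorm_nonneg (w : ℝᵈ → ℝ) (g : ℝᵈ → ℂ) : 0 ≤ wienerNorm w g :=
  mul_nonneg (ftConst_pos d).le (integral_nonneg fun _ => by positivity)

theorem norm_le_wienerNorm_zero {g : ℝᵈ → ℂ} (hgc : Continuous g) (hg : Integrable g)
    (hFg : Integrable (FT g)) (x : ℝᵈ) : ‖g x‖ ≤ wienerNorm 0 g := by
  rw [FT_inversion hgc hg hFg x, norm_ftConst_mul, wienerNorm]
  gcongr
  · exact (ftConst_pos d).le
  · simpa only [norm_mul, norm_planeWave, Pi.zero_apply, Real.exp_zero] using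
      norm_integral_le_integral_norm fun η => FT g η * planeWave x (-η)

theorem norm_FT_mul_le_wienerNorm_mul {g u : ℝᵈ → ℂ} {w : ℝᵈ → ℝ} (hgc : Continuous g)
    (hg : Integrable g) (hFg : Integrable (FT g))
    (hgw : Integrable fun η => ‖FT g η‖ * Real.exp (w η))
    (hw : ∀ ξ η, w ξ ≤ w η + w (ξ - η)) (hu : Integrable u) {D : ℝ}
    (huD : ∀ ξ, ‖FT u ξ‖ ≤ D * Real.exp (-w ξ)) (ξ : ℝᵈ) :
    ‖FT (g * u) ξ‖ ≤ wienerNorm w g * D * Real.exp (-w ξ) := by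
  have hD : 0 ≤ D := by
    have := (norm_nonneg _).trans (huD 0)
    exact nonneg_of_mul_nonneg_left this (Real.exp_pos _)
  rw [FT_mul hgc hg hFg hu, norm_ftConst_mul, wienerNorm, mul_assoc, mul_assoc,
    ← integral_mul_const]
  gcongr
  · exact (ftConst_pos d).le
  refine norm_integral_le_of_norm_le (hgw.mul_const _) (Eventually.of_forall fun η => ?_)
  calc ‖FT g η * FT u (ξ - η)‖ ≤ ‖FT g η‖ * (D * Real.exp (w η + -w ξ)) := by
        rw [norm_mul]
        gcongr
        refine (huD _).trans ?_
        gcongr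
        linarith [hw ξ η]
    _ = ‖FT g η‖ * Real.exp (w η) * (D * Real.exp (-w ξ)) := by
        rw [Real.exp_add]
        ring

end WienerNorm

namespace IsSCutoff

variable {s : ℝ} {φ ψ : EuclideanSpace ℝ (Fin d) → ℂ}

theorem integrable (hφ : IsSCutoff s φ) : Integrable φ :=
  hφ.1.continuous.integrable_of_hasCompactSupport hφ.2.1

theorem integrable_norm_FT_mul_exp (hφ : IsSCutoff s φ) (hs : 0 < s) (k : ℝ) :
    Integrable fun ξ => ‖FT φ ξ‖ * Real.exp (k * ‖ξ‖ ^ (1 / s)) := by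
  have hp : 0 < 1 / s := one_div_pos.2 hs
  obtain ⟨C, hC₀, hC⟩ := hφ.2.2 (|k| + 1) (by positivity)
  refine ((integrable_exp_neg_mul_norm_rpow volume hp one_pos).const_mul C).mono'
    ((continuous_FT hφ.integrable).norm.mul
      (continuous_exp_mul_norm_rpow hp.le k)).aestronglyMeasurable
    (Eventually.of_forall fun ξ => ?_)
  rw [Real.norm_of_nonneg (by positivity)]
  calc ‖FT φ ξ‖ * Real.exp (k * ‖ξ‖ ^ (1 / s))
      ≤ C * Real.exp (-(|k| + 1) * ‖ξ‖ ^ (1 / s)) * Real.exp (|k| * ‖ξ‖ ^ (1 / s)) := by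
        gcongr
        · exact hC ξ
        · exact le_abs_self k
    _ = C * Real.exp (-1 * ‖ξ‖ ^ (1 / s)) := by
        rw [mul_assoc, ← Real.exp_add]
        ring_nf

theorem integrable_FT (hφ : IsSCutoff s φ) (hs : 0 < s) : Integrable (FT φ) := by
  rw [← integrable_norm_iff (continuous_FT hφ.integrable).aestronglyMeasurable]
  simpa using hφ.integrable_norm_FT_mul_exp hs 0

theorem add (hφ : IsSCutoff s φ) (hψ : IsSCutoff s ψ) : IsSCutoff s (φ + ψ) := by
  refine ⟨hφ.1.add hψ.1, hφ.2.1.add hψ.2.1, fun N hN => ?_⟩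
  obtain ⟨C, hC₀, hC⟩ := hφ.2.2 N hN
  obtain ⟨D, hD₀, hD⟩ := hψ.2.2 N hN
  refine ⟨C + D, by positivity, fun ξ => ?_⟩
  rw [FT_add hφ.integrable hψ.integrable, add_mul]
  exact norm_add_le_of_le (hC ξ) (hD ξ)

theorem smul (hφ : IsSCutoff s φ) (a : ℂ) : IsSCutoff s (a • φ) := by
  refine ⟨hφ.1.const_smul a, hφ.2.1.smul_left (f := fun _ => a), fun N hN => ?_⟩
  obtain ⟨C, hC₀, hC⟩ := hφ.2.2 N hN
  refine ⟨(‖a‖ + 1) * C, by positivity, fun ξ => ?_⟩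
  rw [FT_smul, Pi.smul_apply, norm_smul, mul_assoc]
  gcongr
  · exact le_add_of_nonneg_right zero_le_one
  · exact hC ξ

theorem sub (hφ : IsSCutoff s φ) (hψ : IsSCutoff s ψ) : IsSCutoff s (φ - ψ) := by
  simpa [sub_eq_add_neg] using hφ.add (hψ.smul (-1))

theorem mul (hs : 1 < s) (hφ : IsSCutoff s φ) (hψ : IsSCutoff s ψ) : IsSCutoff s (φ * ψ) := by
  have hs₀ : 0 < s := zero_lt_one.trans hs
  refine ⟨hφ.1.mul hψ.1, hφ.2.1.mul_right, fun N hN => ?_⟩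
  obtain ⟨D, hD₀, hD⟩ := hψ.2.2 N hN
  refine ⟨wienerNorm (fun ξ => N * ‖ξ‖ ^ (1 / s)) φ * D + 1, ?_, fun ξ => ?_⟩
  · have := wienerNorm_nonneg (fun ξ => N * ‖ξ‖ ^ (1 / s)) φ
    positivity
  have hw (ξ η : ℝᵈ) : N * ‖ξ‖ ^ (1 / s) ≤ N * ‖η‖ ^ (1 / s) + N * ‖ξ - η‖ ^ (1 / s) := by
    rw [← mul_add]
    gcongr
    exact norm_rpow_le_add (one_div_nonneg.2 hs₀.le) ((div_le_one hs₀).2 hs.le) ξ η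
  calc ‖FT (φ * ψ) ξ‖
      ≤ wienerNorm (fun ξ => N * ‖ξ‖ ^ (1 / s)) φ * D * Real.exp (-(N * ‖ξ‖ ^ (1 / s))) :=
        norm_FT_mul_le_wienerNorm_mul hφ.1.continuous hφ.integrable (hφ.integrable_FT hs₀)
          (hφ.integrable_norm_FT_mul_exp hs₀ N) hw hψ.integrable
          (by simpa only [neg_mul] using hD) ξ
    _ ≤ _ := by
        rw [neg_mul]
        gcongr
        exact le_add_of_nonneg_right zero_le_one

theorem comp_sub (hφ : IsSCutoff s φ) (x₀ : ℝᵈ) : IsSCutoff s fun x => φ (x - x₀) := by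
  refine ⟨hφ.1.comp (by fun_prop), hφ.2.1.comp_homeomorph (Homeomorph.subRight x₀),
    fun N hN => ?_⟩
  obtain ⟨C, hC₀, hC⟩ := hφ.2.2 N hN
  refine ⟨C, hC₀, fun ξ => ?_⟩
  rw [FT_comp_sub, norm_mul, norm_planeWave, one_mul]
  exact hC ξ

theorem comp_smul (hφ : IsSCutoff s φ) {a : ℝ} (ha : a ≠ 0) : IsSCutoff s fun x => φ (a • x) := by
  refine ⟨hφ.1.comp (by fun_prop), hφ.2.1.comp_homeomorph (Homeomorph.smulOfNeZero a ha),
    fun N hN => ?_⟩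
  obtain ⟨C, hC₀, hC⟩ := hφ.2.2 (N * |a| ^ (1 / s)) (by positivity)
  refine ⟨|(a ^ d)⁻¹| * C, by positivity, fun ξ => ?_⟩
  rw [FT_comp_smul φ ha, norm_mul, Complex.norm_real, Real.norm_of_nonneg (abs_nonneg _), mul_assoc]
  gcongr
  refine (hC _).trans_eq ?_
  rw [norm_smul, norm_inv, Real.norm_eq_abs, Real.mul_rpow (by positivity) (norm_nonneg ξ),
    Real.inv_rpow (abs_nonneg a)]
  field_simp

theorem integrable_norm_FT_mul_exp_shiftedRpow (hφ : IsSCutoff s φ) (hs : 1 < s) {N R : ℝ}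
    (hN : 0 ≤ N) (hR : 0 ≤ R) :
    Integrable fun ξ => ‖FT φ ξ‖ * Real.exp (N * shiftedRpow (1 / s) R ‖ξ‖) := by
  have hs₀ : 0 < s := zero_lt_one.trans hs
  have hp : 0 ≤ 1 / s := one_div_nonneg.2 hs₀.le
  have hcont : Continuous fun ξ : ℝᵈ => Real.exp (N * shiftedRpow (1 / s) R ‖ξ‖) :=
    Real.continuous_exp.comp ((continuous_shiftedRpow_norm hp R).const_mul N)
  refine (hφ.integrable_norm_FT_mul_exp hs₀ N).mono'
    ((continuous_FT hφ.integrable).norm.mul hcont).aestronglyMeasurable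
    (Eventually.of_forall fun ξ => ?_)
  rw [Real.norm_of_nonneg (by positivity)]
  gcongr
  exact shiftedRpow_le_rpow hp ((div_le_one hs₀).2 hs.le) hR (norm_nonneg ξ)

theorem exists_norm_FT_le_exp_shiftedRpow (hφ : IsSCutoff s φ) (hs : 1 < s) {N R : ℝ}
    (hN : 0 < N) (hR : 0 ≤ R) :
    ∃ D, 0 < D ∧ ∀ ξ, ‖FT φ ξ‖ ≤ D * Real.exp (-(N * shiftedRpow (1 / s) R ‖ξ‖)) := by
  have hs₀ : 0 < s := zero_lt_one.trans hs
  obtain ⟨D, hD₀, hD⟩ := hφ.2.2 N hN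
  refine ⟨D, hD₀, fun ξ => (hD ξ).trans ?_⟩
  rw [neg_mul]
  gcongr
  exact shiftedRpow_le_rpow (one_div_nonneg.2 hs₀.le) ((div_le_one hs₀).2 hs.le) hR (norm_nonneg ξ)

theorem tendsto_wienerNorm_shiftedRpow (hφ : IsSCutoff s φ) (hs : 1 < s) {N : ℝ} (hN : 0 ≤ N) :
    Tendsto (fun R => wienerNorm (fun ξ => N * shiftedRpow (1 / s) R ‖ξ‖) φ) atTop
      (𝓝 (wienerNorm 0 φ)) := by
  have hs₀ : 0 < s := zero_lt_one.trans hs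
  have hp : 0 ≤ 1 / s := one_div_nonneg.2 hs₀.le
  have hp₁ : 1 / s < 1 := (div_lt_one hs₀).2 hs
  refine Tendsto.const_mul _ (tendsto_integral_filter_of_dominated_convergence
    (fun ξ => ‖FT φ ξ‖ * Real.exp (N * ‖ξ‖ ^ (1 / s))) ?_ ?_
    (hφ.integrable_norm_FT_mul_exp hs₀ N) (Eventually.of_forall fun ξ => ?_))
  · filter_upwards [eventually_ge_atTop 0] with R hR
    exact (hφ.integrable_norm_FT_mul_exp_shiftedRpow hs hN hR).aestronglyMeasurable
  · filter_upwards [eventually_ge_atTop 0] with R hR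
    refine Eventually.of_forall fun ξ => ?_
    rw [Real.norm_of_nonneg (by positivity)]
    gcongr
    exact shiftedRpow_le_rpow hp hp₁.le hR (norm_nonneg ξ)
  · have hR := (tendsto_shiftedRpow_atTop hp hp₁ (norm_nonneg ξ)).const_mul N
    rw [mul_zero] at hR
    exact (Real.continuous_exp.continuousAt.tendsto.comp hR).const_mul _

end IsSCutoff

section CharFun

open ProbabilityTheory

variable {E : Type*} [NormedAddCommGroup E] [InnerProductSpace ℝ E] [MeasurableSpace E]
  {ν : Measure E} {a : ℕ → ℝ}

/-- The law of the random series `∑ aⱼ Xⱼ`, where the `Xⱼ` are independent with law `ν`; its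
characteristic function is the infinite product of those of the `aⱼ Xⱼ`. -/
def seriesLaw (ν : Measure E) (a : ℕ → ℝ) : Measure E :=
  (Measure.infinitePi fun _ : ℕ => ν).map fun w => ∑' j, a j • w j

theorem ae_norm_smul_le [IsProbabilityMeasure ν] (hν : ∀ᵐ x ∂ν, ‖x‖ ≤ 1)
    (ha : ∀ j, 0 ≤ a j) : ∀ᵐ w ∂Measure.infinitePi fun _ : ℕ => ν, ∀ j, ‖a j • w j‖ ≤ a j := by
  refine ae_all_iff.2 fun j => ?_
  filter_upwards [(measurePreserving_eval_infinitePi (fun _ : ℕ => ν)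
    j).quasiMeasurePreserving.ae hν] with w hw
  rw [norm_smul, Real.norm_of_nonneg (ha j)]
  exact mul_le_of_le_one_right (ha j) hw

theorem ae_tendsto_sum_smul [CompleteSpace E] [IsProbabilityMeasure ν]
    (hν : ∀ᵐ x ∂ν, ‖x‖ ≤ 1) (ha : ∀ j, 0 ≤ a j) (hsum : Summable a) :
    ∀ᵐ w ∂Measure.infinitePi fun _ : ℕ => ν,
      Tendsto (fun n => ∑ j ∈ Finset.range n, a j • w j) atTop (𝓝 (∑' j, a j • w j)) := by
  filter_upwards [ae_norm_smul_le hν ha] with w hw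
  exact (Summable.of_norm_bounded hsum hw).hasSum.tendsto_sum_nat

variable [BorelSpace E]

theorem tendsto_charFun_cocompact [FiniteDimensional ℝ E] [IsFiniteMeasure ν]
    (hν : ν ≪ volume) : Tendsto (charFun ν) (cocompact E) (𝓝 0) := by
  have hc : -(2 * Real.pi)⁻¹ ≠ 0 := neg_ne_zero.2 (by positivity)
  refine ((tendsto_integral_exp_inner_smul_cocompact fun x =>
    ((ν.rnDeriv volume x).toReal : ℂ)).comp
    (Homeomorph.smulOfNeZero (α := E) _ hc).isClosedEmbedding.tendsto_cocompact).congr fun ξ => ?_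
  rw [charFun_apply, ← integral_rnDeriv_smul hν]
  refine integral_congr_ae (Eventually.of_forall fun x => ?_)
  simp only [Homeomorph.smulOfNeZero_apply, Circle.smul_def, Real.fourierChar_apply, smul_eq_mul,
    inner_smul_right, Complex.real_smul]
  rw [mul_comm, show 2 * Real.pi * -(-(2 * Real.pi)⁻¹ * ⟪x, ξ⟫) = ⟪x, ξ⟫ by field_simp]

theorem exists_norm_charFun_le [FiniteDimensional ℝ E] [IsFiniteMeasure ν] (hν : ν ≪ volume)
    {ε : ℝ} (hε : 0 < ε) : ∃ M, 0 < M ∧ ∀ ξ, M ≤ ‖ξ‖ → ‖charFun ν ξ‖ ≤ ε := by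
  have h := (tendsto_charFun_cocompact hν).norm.eventually (Iic_mem_nhds (by simpa using hε))
  rw [← Metric.cobounded_eq_cocompact, ← comap_norm_atTop, eventually_comap] at h
  obtain ⟨M, hM⟩ := eventually_atTop.1 h
  exact ⟨max M 1, by positivity, fun ξ hξ => hM _ ((le_max_left _ _).trans hξ) ξ rfl⟩

variable [IsProbabilityMeasure ν] [SecondCountableTopology E]

theorem charFun_map_sum_smul (n : ℕ) (ξ : E) :
    charFun ((Measure.infinitePi fun _ : ℕ => ν).map
      fun w => ∑ j ∈ Finset.range n, a j • w j) ξ =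
      ∏ j ∈ Finset.range n, charFun ν (a j • ξ) := by
  have hind : iIndepFun (fun (j : ℕ) (w : ℕ → E) => a j • w j)
      (Measure.infinitePi fun _ : ℕ => ν) :=
    iIndepFun_infinitePi (X := fun j x => a j • x) fun j => by fun_prop
  have hmeas (j : ℕ) : Measurable fun w : ℕ → E => a j • w j := by fun_prop
  rw [iIndepFun.charFun_map_fun_finsetSum_eq_prod (fun j _ => (hmeas j).aemeasurable)
    (hind.restrict _), Finset.prod_apply]
  refine Finset.prod_congr rfl fun j _ => ?_
  rw [← charFun_map_smul]
  conv_rhs => rw [← Measure.infinitePi_map_eval (fun _ : ℕ => ν) j,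
    Measure.map_map (by fun_prop) (by fun_prop)]
  rfl

variable [CompleteSpace E]

theorem aemeasurable_tsum_smul (hν : ∀ᵐ x ∂ν, ‖x‖ ≤ 1) (ha : ∀ j, 0 ≤ a j) (hsum : Summable a) :
    AEMeasurable (fun w => ∑' j, a j • w j) (Measure.infinitePi fun _ : ℕ => ν) :=
  aemeasurable_of_tendsto_metrizable_ae atTop
    (fun n => Measurable.aemeasurable (by fun_prop)) (ae_tendsto_sum_smul hν ha hsum)

theorem isProbabilityMeasure_seriesLaw (hν : ∀ᵐ x ∂ν, ‖x‖ ≤ 1) (ha : ∀ j, 0 ≤ a j)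
    (hsum : Summable a) : IsProbabilityMeasure (seriesLaw ν a) :=
  Measure.isProbabilityMeasure_map (aemeasurable_tsum_smul hν ha hsum)

theorem ae_norm_le_tsum_seriesLaw (hν : ∀ᵐ x ∂ν, ‖x‖ ≤ 1) (ha : ∀ j, 0 ≤ a j)
    (hsum : Summable a) : ∀ᵐ x ∂seriesLaw ν a, ‖x‖ ≤ ∑' j, a j := by
  rw [seriesLaw, ae_map_iff (aemeasurable_tsum_smul hν ha hsum)
    (measurableSet_le measurable_norm measurable_const)]
  filter_upwards [ae_norm_smul_le hν ha] with w hw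
  exact tsum_of_norm_bounded hsum.hasSum hw

theorem tendsto_prod_charFun_smul (hν : ∀ᵐ x ∂ν, ‖x‖ ≤ 1) (ha : ∀ j, 0 ≤ a j)
    (hsum : Summable a) (ξ : E) :
    Tendsto (fun n => ∏ j ∈ Finset.range n, charFun ν (a j • ξ)) atTop
      (𝓝 (charFun (seriesLaw ν a) ξ)) := by
  have hcont : Continuous fun x : E => Complex.exp (⟪x, ξ⟫ * Complex.I) := by fun_prop
  have hmeas (n : ℕ) : Measurable fun w : ℕ → E => ∑ j ∈ Finset.range n, a j • w j := by fun_prop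
  simp_rw [← charFun_map_sum_smul, charFun_apply, seriesLaw]
  rw [integral_map (aemeasurable_tsum_smul hν ha hsum) hcont.aestronglyMeasurable]
  simp_rw [fun n => integral_map (hmeas n).aemeasurable
    (hcont.aestronglyMeasurable (μ := (Measure.infinitePi fun _ : ℕ => ν).map _))]
  refine tendsto_integral_of_dominated_convergence (fun _ => 1)
    (fun n => (hcont.measurable.comp (hmeas n)).aestronglyMeasurable) (integrable_const _)
    (fun n => Eventually.of_forall fun w => (Complex.norm_exp_ofReal_mul_I _).le) ?_
  filter_upwards [ae_tendsto_sum_smul hν ha hsum] with w hw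
  exact (hcont.tendsto _).comp hw

theorem norm_charFun_seriesLaw_le (hν : ∀ᵐ x ∂ν, ‖x‖ ≤ 1) (ha : ∀ j, 0 ≤ a j)
    (hsum : Summable a) (ξ : E) (n : ℕ) :
    ‖charFun (seriesLaw ν a) ξ‖ ≤ ∏ j ∈ Finset.range n, ‖charFun ν (a j • ξ)‖ := by
  refine le_of_tendsto (tendsto_prod_charFun_smul hν ha hsum ξ).norm ?_
  filter_upwards [eventually_ge_atTop n] with m hm
  rw [norm_prod]
  exact Finset.prod_le_prod_of_subset_of_le_one (Finset.range_mono hm) (fun _ _ => norm_nonneg _)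
    fun j _ _ => norm_charFun_le_one _

theorem norm_charFun_seriesLaw_le_exp (hν : ∀ᵐ x ∂ν, ‖x‖ ≤ 1) (ha : ∀ j, 0 ≤ a j)
    (hsum : Summable a) {M : ℝ} (hM : ∀ ξ, M ≤ ‖ξ‖ → ‖charFun ν ξ‖ ≤ Real.exp (-1)) {ξ : E} {n : ℕ}
    (hn : ∀ j < n, M ≤ a j * ‖ξ‖) : ‖charFun (seriesLaw ν a) ξ‖ ≤ Real.exp (-n) := by
  calc ‖charFun (seriesLaw ν a) ξ‖ ≤ ∏ j ∈ Finset.range n, ‖charFun ν (a j • ξ)‖ :=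
        norm_charFun_seriesLaw_le hν ha hsum ξ n
    _ ≤ ∏ _j ∈ Finset.range n, Real.exp (-1) := by
        refine Finset.prod_le_prod (fun _ _ => norm_nonneg _) fun j hj => hM _ ?_
        rw [norm_smul, Real.norm_of_nonneg (ha j)]
        exact hn j (Finset.mem_range.1 hj)
    _ = Real.exp (-n) := by
        rw [Finset.prod_const, Finset.card_range, ← Real.exp_nat_mul, mul_neg_one]

theorem summable_add_one_rpow_neg {σ : ℝ} (hσ : 1 < σ) :
    Summable fun j : ℕ => ((j : ℝ) + 1) ^ (-σ) := by
  simpa using (summable_nat_add_iff 1).2 (Real.summable_nat_rpow.2 (neg_lt_neg hσ))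

theorem norm_charFun_seriesLaw_rpow_le (hν : ∀ᵐ x ∂ν, ‖x‖ ≤ 1) {M : ℝ} (hM₀ : 0 < M)
    (hM : ∀ ξ, M ≤ ‖ξ‖ → ‖charFun ν ξ‖ ≤ Real.exp (-1)) {σ : ℝ} (hσ : 1 < σ) (ξ : E) :
    ‖charFun (seriesLaw ν fun j : ℕ => ((j : ℝ) + 1) ^ (-σ)) ξ‖ ≤
      Real.exp (1 - (‖ξ‖ / M) ^ (1 / σ)) := by
  have hσ₀ : 0 < σ := zero_lt_one.trans hσ
  refine (norm_charFun_seriesLaw_le_exp hν (fun j => by positivity)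
    (summable_add_one_rpow_neg hσ) hM (n := ⌊(‖ξ‖ / M) ^ (1 / σ)⌋₊) fun j hj => ?_).trans ?_
  · have hj₁ : (j : ℝ) + 1 ≤ (‖ξ‖ / M) ^ σ⁻¹ := by
      rw [← one_div]
      exact_mod_cast (Nat.le_floor_iff (by positivity)).1 hj
    have hj₂ := (Real.le_rpow_inv_iff_of_pos (by positivity) (by positivity) hσ₀).1 hj₁
    rw [Real.rpow_neg (by positivity), ← div_eq_inv_mul]
    rwa [le_div_comm₀ (by positivity) hM₀] at hj₂
  · exact Real.exp_le_exp.2 (by linarith [Nat.lt_floor_add_one ((‖ξ‖ / M) ^ (1 / σ))])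

end CharFun

section ExistsCutoff

open ProbabilityTheory

variable {E : Type*} [NormedAddCommGroup E] [InnerProductSpace ℝ E] [FiniteDimensional ℝ E]
  [MeasurableSpace E] [BorelSpace E]

theorem exists_isProbabilityMeasure_norm_charFun_le {s : ℝ} (hs : 1 < s) :
    ∃ μ : Measure E, IsProbabilityMeasure μ ∧ ∃ A, 0 ≤ A ∧ (∀ᵐ y ∂μ, ‖y‖ ≤ A) ∧
      ∀ N, 0 ≤ N → ∃ C, 0 < C ∧ ∀ ξ, ‖charFun μ ξ‖ ≤ C * Real.exp (-N * ‖ξ‖ ^ (1 / s)) := by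
  let ν : Measure E := volume[|Metric.ball 0 1]
  have : IsProbabilityMeasure ν := cond_isProbabilityMeasure_of_finite
    (Metric.measure_ball_pos volume 0 one_pos).ne' measure_ball_lt_top.ne
  have hν : ∀ᵐ x ∂ν, ‖x‖ ≤ 1 := ae_cond_of_forall_mem Metric.isOpen_ball.measurableSet
    fun x hx => (mem_ball_zero_iff.1 hx).le
  obtain ⟨M, hM₀, hM⟩ := exists_norm_charFun_le (ν := ν) cond_absolutelyContinuous
    (Real.exp_pos (-1))
  obtain ⟨σ, hσ, hσs⟩ := exists_between hs
  have hσ₀ : 0 < σ := zero_lt_one.trans hσ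
  have hnonneg (j : ℕ) : 0 ≤ ((j : ℝ) + 1) ^ (-σ) := by positivity
  have hsum := summable_add_one_rpow_neg hσ
  refine ⟨seriesLaw ν _, isProbabilityMeasure_seriesLaw hν hnonneg hsum, _, tsum_nonneg hnonneg,
    ae_norm_le_tsum_seriesLaw hν hnonneg hsum, fun N hN => ?_⟩
  obtain ⟨B, hB⟩ := exists_mul_rpow_le_mul_rpow_add (p := 1 / s) (p' := 1 / σ)
    (c := (M ^ (1 / σ))⁻¹) (one_div_pos.2 (hσ₀.trans hσs)).le (one_div_lt_one_div_of_lt hσ₀ hσs) hN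
    (by positivity)
  refine ⟨Real.exp (1 + B), Real.exp_pos _, fun ξ => ?_⟩
  refine (norm_charFun_seriesLaw_rpow_le hν hM₀ hM hσ ξ).trans ?_
  rw [← Real.exp_add, Real.exp_le_exp, Real.div_rpow (norm_nonneg _) hM₀.le, div_eq_inv_mul]
  linarith [hB ‖ξ‖ (norm_nonneg _)]

/-- The convolution of `g` with the measure `μ`. It is as smooth as `g`, and its Fourier transform
inherits the decay of `charFun μ`. -/
def mollify (μ : Measure ℝᵈ) (g : ℝᵈ → ℂ) (x : ℝᵈ) : ℂ := ∫ y, g (x - y) ∂μ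

variable {μ : Measure (EuclideanSpace ℝ (Fin d))} {g : EuclideanSpace ℝ (Fin d) → ℂ}

theorem contDiff_mollify [IsFiniteMeasure μ] (hgc : HasCompactSupport g)
    (hg : ContDiff ℝ (⊤ : ℕ∞) g) : ContDiff ℝ (⊤ : ℕ∞) (mollify μ g) := by
  have h := hgc.contDiff_convolution_right (ContinuousLinearMap.mul ℝ ℂ)
    (locallyIntegrable_const (μ := μ) (1 : ℂ)) hg
  have hconv : convolution (fun _ => 1) g (ContinuousLinearMap.mul ℝ ℂ) μ = mollify μ g := by
    ext x
    simp [mollify, convolution]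
  rwa [hconv] at h

theorem hasCompactSupport_mollify {A B : ℝ} (hμ : ∀ᵐ y ∂μ, ‖y‖ ≤ A)
    (hg : ∀ x, B ≤ ‖x‖ → g x = 0) : HasCompactSupport (mollify μ g) := by
  refine HasCompactSupport.of_support_subset_isCompact (isCompact_closedBall 0 (A + B)) ?_
  refine Function.support_subset_iff'.2 fun x hx => integral_eq_zero_of_ae ?_
  rw [mem_closedBall_zero_iff, not_le] at hx
  filter_upwards [hμ] with y hy
  exact hg _ (by linarith [norm_sub_norm_le x y])

theorem mollify_eq_one [IsProbabilityMeasure μ] {A B : ℝ} (hμ : ∀ᵐ y ∂μ, ‖y‖ ≤ A)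
    (hg : ∀ x, ‖x‖ ≤ A + B → g x = 1) {x : ℝᵈ} (hx : ‖x‖ ≤ B) : mollify μ g x = 1 := by
  have h : ∀ᵐ y ∂μ, g (x - y) = 1 := by
    filter_upwards [hμ] with y hy
    exact hg _ (by linarith [norm_sub_le x y])
  simp [mollify, integral_congr_ae h]

theorem FT_mollify [IsFiniteMeasure μ] (hgc : Continuous g) (hg : Integrable g) (ξ : ℝᵈ) :
    FT (mollify μ g) ξ = charFun μ (-ξ) * FT g ξ := by
  have hint : Integrable (fun z : ℝᵈ × ℝᵈ => g (z.1 - z.2) * planeWave z.1 ξ)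
      (volume.prod μ) := by
    rw [integrable_prod_iff' (Continuous.aestronglyMeasurable (by fun_prop))]
    refine ⟨Eventually.of_forall fun y => integrable_mul_planeWave (hg.comp_sub_right y) ξ, ?_⟩
    simp only [norm_mul, norm_planeWave, mul_one, integral_sub_right_eq_self (fun x => ‖g x‖)]
    exact integrable_const _
  calc FT (mollify μ g) ξ = ftConst d * ∫ x, ∫ y, g (x - y) * planeWave x ξ ∂μ := by
        simp only [FT_eq, mollify, integral_mul_const]
    _ = ∫ y, FT (fun x => g (x - y)) ξ ∂μ := by
        rw [integral_integral_swap hint, ← integral_const_mul]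
        rfl
    _ = charFun μ (-ξ) * FT g ξ := by
        simp only [FT_comp_sub, integral_mul_const, charFun_apply, planeWave, inner_neg_right,
          Complex.ofReal_neg]

theorem exists_isSCutoff_eq_one {s : ℝ} (hs : 1 < s) :
    ∃ χ : ℝᵈ → ℂ, IsSCutoff s χ ∧ ∀ x, ‖x‖ ≤ 1 → χ x = 1 := by
  obtain ⟨μ, hμ, A, hA₀, hA, hdecay⟩ := exists_isProbabilityMeasure_norm_charFun_le
    (E := ℝᵈ) hs
  let b : ContDiffBump (0 : ℝᵈ) := ⟨A + 1, A + 2, by linarith, by linarith⟩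
  have hb : ContDiff ℝ (⊤ : ℕ∞) fun x => (b x : ℂ) := Complex.ofRealCLM.contDiff.comp b.contDiff
  have hbc : HasCompactSupport fun x => (b x : ℂ) :=
    b.hasCompactSupport.comp_left Complex.ofReal_zero
  have hbi := hb.continuous.integrable_of_hasCompactSupport (μ := volume) hbc
  refine ⟨mollify μ fun x => (b x : ℂ), ⟨contDiff_mollify hbc hb,
    hasCompactSupport_mollify (B := A + 2) hA fun x hx => ?_, fun N hN => ?_⟩,
    fun x => mollify_eq_one hA fun y hy => ?_⟩
  · rw [b.zero_of_le_dist (by simpa using hx), Complex.ofReal_zero]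
  · obtain ⟨C, hC₀, hC⟩ := hdecay N hN.le
    have hFT := norm_FT_le fun x => (b x : ℂ)
    have hB : 0 ≤ ftConst d * ∫ x, ‖(b x : ℂ)‖ := (norm_nonneg _).trans (hFT 0)
    refine ⟨C * (ftConst d * (∫ x, ‖(b x : ℂ)‖) + 1), by positivity, fun ξ => ?_⟩
    rw [FT_mollify hb.continuous hbi, norm_mul, mul_right_comm]
    gcongr
    · simpa only [norm_neg] using hC (-ξ)
    · exact (hFT ξ).trans (le_add_of_nonneg_right zero_le_one)
  · rw [b.one_of_mem_closedBall (by simpa using hy), Complex.ofReal_one]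

end ExistsCutoff

theorem min_le_min_add_min {a b c t : ℝ} (hb : 0 ≤ b) (hc : 0 ≤ c) (ht : 0 ≤ t)
    (h : a ≤ b + c) : min a t ≤ min b t + min c t := by
  rcases le_total b t with hbt | hbt <;> rcases le_total c t with hct | hct <;>
    simp only [hbt, hct, min_eq_left, min_eq_right, min_le_iff] <;> grind

section LocalInverse

variable {g h ψ φ χ : EuclideanSpace ℝ (Fin d) → ℂ} {w : EuclideanSpace ℝ (Fin d) → ℝ}

theorem norm_FT_le_of_eq_add_mul_of_le (hgc : Continuous g) (hg : Integrable g)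
    (hFg : Integrable (FT g)) (hgw : Integrable fun η => ‖FT g η‖ * Real.exp (w η))
    (hw : ∀ ξ η, w ξ ≤ w η + w (ξ - η)) {T : ℝ} (hT : ∀ ξ, w ξ ≤ T) (hg₁ : wienerNorm w g < 1)
    (hψ : Integrable ψ) (hh : Integrable h) (heq : h = ψ + g * h) {D : ℝ}
    (hD : ∀ ξ, ‖FT ψ ξ‖ ≤ D * Real.exp (-w ξ)) (ξ : ℝᵈ) :
    ‖FT h ξ‖ ≤ D / (1 - wienerNorm w g) * Real.exp (-w ξ) := by
  have hbdd : BddAbove (range fun ξ => ‖FT h ξ‖ * Real.exp (w ξ)) := by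
    refine ⟨(ftConst d * ∫ x, ‖h x‖) * Real.exp T, ?_⟩
    rintro _ ⟨ξ, rfl⟩
    dsimp only
    gcongr
    · exact (norm_nonneg _).trans (norm_FT_le h ξ)
    · exact norm_FT_le h ξ
    · exact hT ξ
  set A := ⨆ ξ, ‖FT h ξ‖ * Real.exp (w ξ)
  have hA (ξ : ℝᵈ) : ‖FT h ξ‖ ≤ A * Real.exp (-w ξ) := by
    rw [Real.exp_neg, ← div_eq_mul_inv, le_div_iff₀ (Real.exp_pos _)]
    exact le_ciSup hbdd ξ
  have hgh : Integrable (g * h) := by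
    have h₁ : g * h = h - ψ := eq_sub_of_add_eq' heq.symm
    exact h₁ ▸ hh.sub hψ
  have hle : A ≤ D + wienerNorm w g * A := by
    refine ciSup_le fun ξ => ?_
    rw [← le_div_iff₀ (Real.exp_pos _), div_eq_mul_inv, ← Real.exp_neg, add_mul]
    calc ‖FT h ξ‖ = ‖FT ψ ξ + FT (g * h) ξ‖ := by
          rw [← Pi.add_apply, ← FT_add hψ hgh, ← heq]
      _ ≤ _ := norm_add_le_of_le (hD ξ)
          (norm_FT_mul_le_wienerNorm_mul hgc hg hFg hgw hw hh hA ξ)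
  have hA' : A ≤ D / (1 - wienerNorm w g) := by
    rw [le_div_iff₀ (sub_pos.2 hg₁)]
    linarith
  exact (hA ξ).trans (by gcongr)

/- The supremum defining the best constant in the bounded case need not be finite in general, so
`w` is first replaced by its truncation at the height `w ξ`, which is again subadditive. -/
theorem norm_FT_le_of_eq_add_mul (hgc : Continuous g) (hg : Integrable g) (hFg : Integrable (FT g))
    (hgw : Integrable fun η => ‖FT g η‖ * Real.exp (w η)) (hw₀ : ∀ ξ, 0 ≤ w ξ)
    (hwm : Measurable w) (hw : ∀ ξ η, w ξ ≤ w η + w (ξ - η)) (hg₁ : wienerNorm w g < 1)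
    (hψ : Integrable ψ) (hh : Integrable h) (heq : h = ψ + g * h) {D : ℝ}
    (hD : ∀ ξ, ‖FT ψ ξ‖ ≤ D * Real.exp (-w ξ)) (ξ : ℝᵈ) :
    ‖FT h ξ‖ ≤ D / (1 - wienerNorm w g) * Real.exp (-w ξ) := by
  have hD₀ : 0 ≤ D := nonneg_of_mul_nonneg_left ((norm_nonneg _).trans (hD 0)) (Real.exp_pos _)
  let v (η : ℝᵈ) : ℝ := min (w η) (w ξ)
  have hvw (η : ℝᵈ) : v η ≤ w η := min_le_left _ _
  have hv (η ζ : ℝᵈ) : v η ≤ v ζ + v (η - ζ) :=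
    min_le_min_add_min (hw₀ ζ) (hw₀ (η - ζ)) (hw₀ ξ) (hw η ζ)
  have hgv : Integrable fun η => ‖FT g η‖ * Real.exp (v η) := by
    refine hgw.mono' (by fun_prop) (Eventually.of_forall fun η => ?_)
    rw [Real.norm_of_nonneg (by positivity)]
    gcongr
    exact hvw η
  have hle : wienerNorm v g ≤ wienerNorm w g :=
    mul_le_mul_of_nonneg_left (integral_mono hgv hgw fun η => by
      dsimp only
      gcongr
      exact hvw η) (ftConst_pos d).le
  have h := norm_FT_le_of_eq_add_mul_of_le hgc hg hFg hgv hv (fun η => min_le_right _ _)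
    (hle.trans_lt hg₁) hψ hh heq (fun η => (hD η).trans (by gcongr; exact hvw η)) ξ
  rw [show v ξ = w ξ from min_self _] at h
  refine h.trans ?_
  have := sub_pos.2 hg₁
  gcongr

theorem IsSCutoff.one_sub_apply_ne_zero {s : ℝ} (hs : 0 < s) (hg : IsSCutoff s g)
    (hg₁ : wienerNorm 0 g < 1) (x : ℝᵈ) : 1 - g x ≠ 0 := fun h => by
  have := norm_le_wienerNorm_zero hg.1.continuous hg.integrable (hg.integrable_FT hs) x
  rw [← sub_eq_zero.1 h, norm_one] at this
  linarith

theorem div_one_sub_eq_add_mul (hg : ∀ x, 1 - g x ≠ 0) :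
    ψ / (1 - g) = ψ + g * (ψ / (1 - g)) := by
  ext x
  have := hg x
  simp only [Pi.add_apply, Pi.mul_apply, Pi.div_apply, Pi.sub_apply, Pi.one_apply]
  field_simp
  ring

theorem IsSCutoff.div_one_sub {s : ℝ} (hs : 1 < s) (hψ : IsSCutoff s ψ) (hg : IsSCutoff s g)
    (hg₁ : wienerNorm 0 g < 1) : IsSCutoff s (ψ / (1 - g)) := by
  have hs₀ : 0 < s := zero_lt_one.trans hs
  have hp : 0 ≤ 1 / s := one_div_nonneg.2 hs₀.le
  have hp₁ : 1 / s ≤ 1 := (div_le_one hs₀).2 hs.le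
  have hFg := hg.integrable_FT hs₀
  have hne := hg.one_sub_apply_ne_zero hs₀ hg₁
  have hsmooth : ContDiff ℝ (⊤ : ℕ∞) (ψ / (1 - g)) := by
    rw [div_eq_mul_inv]
    exact hψ.1.mul ((contDiff_const.sub hg.1).inv hne)
  have hsupp : HasCompactSupport (ψ / (1 - g)) := by
    rw [div_eq_mul_inv]
    exact hψ.2.1.mul_right
  refine ⟨hsmooth, hsupp, fun N hN => ?_⟩
  obtain ⟨R, hR₁, hR⟩ := ((hg.tendsto_wienerNorm_shiftedRpow hs hN.le).eventually_lt_const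
    hg₁ |>.and (eventually_ge_atTop 0)).exists
  obtain ⟨D, hD₀, hD⟩ := hψ.exists_norm_FT_le_exp_shiftedRpow hs hN hR
  have hw (ξ η : ℝᵈ) : N * shiftedRpow (1 / s) R ‖ξ‖ ≤
      N * shiftedRpow (1 / s) R ‖η‖ + N * shiftedRpow (1 / s) R ‖ξ - η‖ := by
    rw [← mul_add]
    gcongr
    exact shiftedRpow_norm_le_add hp hp₁ hR ξ η
  have hdecay := norm_FT_le_of_eq_add_mul hg.1.continuous hg.integrable hFg
    (hg.integrable_norm_FT_mul_exp_shiftedRpow hs hN.le hR)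
    (fun ξ => mul_nonneg hN.le (shiftedRpow_nonneg hp hR (norm_nonneg ξ)))
    ((continuous_shiftedRpow_norm hp R).const_mul N).measurable hw hR₁ hψ.integrable
    (hsmooth.continuous.integrable_of_hasCompactSupport hsupp)
    (div_one_sub_eq_add_mul hne) hD
  have := sub_pos.2 hR₁
  refine ⟨D / (1 - wienerNorm (fun ξ => N * shiftedRpow (1 / s) R ‖ξ‖) g) *
    Real.exp (N * R ^ (1 / s)), by positivity, fun ξ => (hdecay ξ).trans ?_⟩
  rw [mul_assoc, ← Real.exp_add]
  gcongr
  linarith [mul_le_mul_of_nonneg_left (rpow_sub_rpow_le_shiftedRpow hp hR (norm_nonneg ξ)) hN.le]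

theorem wienerNorm_comp_smul (w : ℝᵈ → ℝ) (g : ℝᵈ → ℂ) {a : ℝ} (ha : a ≠ 0) :
    wienerNorm w (fun x => g (a • x)) = wienerNorm (fun η => w (a • η)) g := by
  have h := Measure.integral_comp_smul volume
    (fun η : ℝᵈ => ‖FT g η‖ * Real.exp (w (a • η))) a⁻¹
  simp only [smul_inv_smul₀ ha, finrank_euclideanSpace_fin, inv_pow, inv_inv, smul_eq_mul] at h
  rw [wienerNorm, wienerNorm]
  simp only [FT_comp_smul g ha, norm_mul, Complex.norm_real, Real.norm_eq_abs, abs_abs]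
  simp only [mul_assoc, integral_const_mul]
  rw [h, ← mul_assoc |_|, ← abs_mul, inv_mul_cancel₀ (pow_ne_zero d ha), abs_one, one_mul]

theorem IsSCutoff.exists_norm_FT_comp_smul_mul_le {s : ℝ} (hs : 1 < s) (hφ : IsSCutoff s φ)
    (hχ : IsSCutoff s χ) : ∃ D, ∀ ε ∈ Ioc (0 : ℝ) 1, ∀ ξ,
      ‖FT ((fun x => φ (ε • x)) * χ) ξ‖ ≤ D * Real.exp (-1 * ‖ξ‖ ^ (1 / s)) := by
  have hs₀ : 0 < s := zero_lt_one.trans hs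
  obtain ⟨D, hD₀, hD⟩ := hχ.2.2 1 one_pos
  have hint := hφ.integrable_norm_FT_mul_exp hs₀ 1
  refine ⟨wienerNorm (fun η => 1 * ‖η‖ ^ (1 / s)) φ * D, fun ε hε ξ => ?_⟩
  have hφε : IsSCutoff s fun x => φ (ε • x) := hφ.comp_smul hε.1.ne'
  have hle : wienerNorm (fun η => 1 * ‖η‖ ^ (1 / s)) (fun x => φ (ε • x)) ≤
      wienerNorm (fun η => 1 * ‖η‖ ^ (1 / s)) φ := by
    rw [wienerNorm_comp_smul _ _ hε.1.ne']
    refine mul_le_mul_of_nonneg_left (integral_mono_of_nonneg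
      (Eventually.of_forall fun η => by positivity) hint (Eventually.of_forall fun η => ?_))
      (ftConst_pos d).le
    dsimp only
    rw [norm_smul, Real.norm_of_nonneg hε.1.le]
    gcongr
    · exact mul_nonneg hε.1.le (norm_nonneg η)
    · exact mul_le_of_le_one_left (norm_nonneg η) hε.2
  calc ‖FT ((fun x => φ (ε • x)) * χ) ξ‖ ≤ _ :=
        norm_FT_mul_le_wienerNorm_mul (D := D) hφε.1.continuous hφε.integrable
          (hφε.integrable_FT hs₀) (hφε.integrable_norm_FT_mul_exp hs₀ 1) (fun ξ η => by
            simpa only [one_mul] using norm_rpow_le_add (one_div_nonneg.2 hs₀.le)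
              ((div_le_one hs₀).2 hs.le) ξ η) hχ.integrable
          (by simpa only [neg_mul] using hD) ξ
    _ ≤ _ := by
        rw [neg_mul]
        gcongr

theorem IsSCutoff.tendsto_FT_comp_smul_mul {s : ℝ} (hs : 0 < s) (hφ : IsSCutoff s φ)
    (hφ₀ : φ 0 = 1) (hχ : Integrable χ) (ξ : ℝᵈ) :
    Tendsto (fun ε : ℝ => FT ((fun x => φ (ε • x)) * χ) ξ) (𝓝 0) (𝓝 (FT χ ξ)) := by
  simp only [FT_eq]
  refine Tendsto.const_mul _ (tendsto_integral_filter_of_dominated_convergence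
    (fun x => wienerNorm 0 φ * ‖χ x‖) (Eventually.of_forall fun ε => ?_)
    (Eventually.of_forall fun ε => Eventually.of_forall fun x => ?_) (hχ.norm.const_mul _)
    (Eventually.of_forall fun x => ?_))
  · have hφε : Continuous fun x : ℝᵈ => φ (ε • x) := hφ.1.continuous.comp (by fun_prop)
    exact (hφε.aestronglyMeasurable.mul hχ.1).mul (by fun_prop)
  · rw [norm_mul, norm_planeWave, mul_one, Pi.mul_apply, norm_mul]
    gcongr
    exact norm_le_wienerNorm_zero hφ.1.continuous hφ.integrable (hφ.integrable_FT hs) _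
  · have h : ContinuousAt (fun ε : ℝ => φ (ε • x) * χ x * planeWave x ξ) 0 :=
      (((hφ.1.continuous.comp (by fun_prop : Continuous fun ε : ℝ => ε • x)).mul
        continuous_const).mul continuous_const).continuousAt
    simpa [ContinuousAt, hφ₀] using h

/- This is why a cutoff is invertible near `0`: rescaled by a small `ε`, it differs there from `1`
by a cutoff of Wiener norm less than `1`. -/
theorem IsSCutoff.tendsto_wienerNorm_sub_comp_smul_mul {s : ℝ} (hs : 1 < s) (hφ : IsSCutoff s φ)
    (hφ₀ : φ 0 = 1) (hχ : IsSCutoff s χ) :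
    Tendsto (fun ε : ℝ => wienerNorm 0 (χ - (fun x => φ (ε • x)) * χ)) (𝓝[>] 0) (𝓝 0) := by
  have hs₀ : 0 < s := zero_lt_one.trans hs
  obtain ⟨C, -, hC⟩ := hχ.2.2 1 one_pos
  obtain ⟨D, hD⟩ := hφ.exists_norm_FT_comp_smul_mul_le hs hχ
  have hε : ∀ᶠ ε : ℝ in 𝓝[>] 0, ε ∈ Ioc 0 1 := Ioc_mem_nhdsGT one_pos
  have hprod {ε : ℝ} (hε : ε ∈ Ioc (0 : ℝ) 1) : IsSCutoff s ((fun x => φ (ε • x)) * χ) :=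
    (hφ.comp_smul hε.1.ne').mul hs hχ
  have hlim : Tendsto (fun ε : ℝ => ∫ ξ, ‖FT (χ - (fun x => φ (ε • x)) * χ) ξ‖) (𝓝[>] 0)
      (𝓝 (∫ _ : ℝᵈ, 0)) := by
    refine tendsto_integral_filter_of_dominated_convergence
      (fun ξ => (C + D) * Real.exp (-1 * ‖ξ‖ ^ (1 / s))) ?_ ?_
      ((integrable_exp_neg_mul_norm_rpow volume (one_div_pos.2 hs₀) one_pos).const_mul _)
      (Eventually.of_forall fun ξ => ?_)
    · filter_upwards [hε] with ε hε
      exact (continuous_FT (hχ.sub (hprod hε)).integrable).norm.aestronglyMeasurable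
    · filter_upwards [hε] with ε hε
      refine Eventually.of_forall fun ξ => ?_
      rw [norm_norm, FT_sub hχ.integrable (hprod hε).integrable, Pi.sub_apply, add_mul]
      exact norm_sub_le_of_le (hC ξ) (hD ε hε ξ)
    · have h := ((hφ.tendsto_FT_comp_smul_mul hs₀ hφ₀ hχ.integrable ξ).mono_left
        (nhdsWithin_le_nhds (s := Ioi 0))).const_sub (FT χ ξ) |>.norm
      rw [sub_self, norm_zero] at h
      refine h.congr' ?_
      filter_upwards [hε] with ε hε
      rw [FT_sub hχ.integrable (hprod hε).integrable, Pi.sub_apply]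
  simpa [wienerNorm] using hlim.const_mul (ftConst d)

theorem IsSCutoff.exists_mul_eventuallyEq_one_of_eq_one {s : ℝ} (hs : 1 < s) (hφ : IsSCutoff s φ)
    (hφ₀ : φ 0 = 1) : ∃ ψ, IsSCutoff s ψ ∧ ψ * φ =ᶠ[𝓝 0] 1 := by
  obtain ⟨χ, hχ, hχ₁⟩ := exists_isSCutoff_eq_one (d := d) hs
  obtain ⟨ε, hε₁, hε : 0 < ε⟩ := ((hφ.tendsto_wienerNorm_sub_comp_smul_mul hs hφ₀
    hχ).eventually_lt_const one_pos |>.and self_mem_nhdsWithin).exists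
  set g : ℝᵈ → ℂ := χ - (fun x => φ (ε • x)) * χ
  have hg : IsSCutoff s g := hχ.sub ((hφ.comp_smul hε.ne').mul hs hχ)
  refine ⟨_, (hχ.div_one_sub hs hg hε₁).comp_smul (inv_ne_zero hε.ne'), ?_⟩
  filter_upwards [Metric.closedBall_mem_nhds 0 hε] with x hx
  have hχx : χ (ε⁻¹ • x) = 1 := hχ₁ _ <| by
    rwa [norm_smul, norm_inv, Real.norm_of_nonneg hε.le, inv_mul_le_one₀ hε,
      ← mem_closedBall_zero_iff]
  have hgx : 1 - g (ε⁻¹ • x) = φ x := by simp [g, hχx, hε.ne']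
  have hφx : φ x ≠ 0 := hgx ▸ hg.one_sub_apply_ne_zero (zero_lt_one.trans hs) hε₁ _
  simp only [Pi.mul_apply, Pi.div_apply, Pi.sub_apply, Pi.one_apply, hgx, hχx,
    div_mul_cancel₀ _ hφx]

theorem IsSCutoff.exists_mul_eventuallyEq_one {s : ℝ} (hs : 1 < s) (hφ : IsSCutoff s φ) {x₀ : ℝᵈ}
    (hφ₀ : φ x₀ ≠ 0) : ∃ ψ, IsSCutoff s ψ ∧ ψ * φ =ᶠ[𝓝 x₀] 1 := by
  have hφ' : IsSCutoff s ((φ x₀)⁻¹ • fun x => φ (x - -x₀)) := (hφ.comp_sub (-x₀)).smul _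
  obtain ⟨ψ, hψ, hψφ⟩ := hφ'.exists_mul_eventuallyEq_one_of_eq_one hs (by simp [hφ₀])
  refine ⟨_, (hψ.comp_sub x₀).smul (φ x₀)⁻¹, ?_⟩
  have hlim : Tendsto (fun x => x - x₀) (𝓝 x₀) (𝓝 0) := by
    simpa using (continuous_sub_right x₀).tendsto x₀
  filter_upwards [hlim.eventually hψφ] with x hx
  simp only [Pi.mul_apply, Pi.smul_apply, smul_eq_mul, sub_neg_eq_add, sub_add_cancel,
    Pi.one_apply] at hx ⊢
  rw [← hx]
  ring

end LocalInverse

section FourierLebesgue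

variable {s : ℝ} {q : ℝ≥0∞} {ω : EuclideanSpace ℝ (Fin d) → ℝ}
  {f u ψ : EuclideanSpace ℝ (Fin d) → ℂ} {S Γ : Set (EuclideanSpace ℝ (Fin d))}

theorem FLSemi_eq : FLSemi ω q f S =
    eLpNorm (fun ξ => ‖FT f ξ‖ₑ * ‖ω ξ‖ₑ) q (volume.restrict S) :=
  eLpNorm_congr_enorm_ae (Eventually.of_forall fun ξ => by simp [enorm_mul])

theorem IsSAdmissible.exists_le_mul_exp (hω : IsSAdmissible s ω) : ∃ k > 0, ∃ C > 0, ∀ ξ η,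
    ω ξ ≤ C * Real.exp (k * ‖ξ - η‖ ^ (1 / s)) * ω η := by
  obtain ⟨-, hω₀, v, -, -, -, -, C₀, k, C₁, hC₀, hk, hC₁, hv, hωv⟩ := hω
  refine ⟨k, hk, C₁ * C₀, mul_pos hC₁ hC₀, fun ξ η => ?_⟩
  calc ω ξ = ω (ξ - η + η) := by rw [sub_add_cancel]
    _ ≤ C₁ * v (ξ - η) * ω η := hωv _ _
    _ ≤ C₁ * C₀ * Real.exp (k * ‖ξ - η‖ ^ (1 / s)) * ω η := by
        rw [mul_assoc C₁ C₀]
        have := hω₀ η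
        gcongr
        exact hv _

theorem IsSAdmissible.exists_le_mul_exp_of_le (hω : IsSAdmissible s ω) (hs : 0 < s) {δ : ℝ}
    (hδ : 0 < δ) : ∃ k C : ℝ, ∀ ξ η,
      ω ξ ≤ C * Real.exp (k * ‖ξ - η‖ ^ (1 / s)) * ω η ∧
      (δ * ‖ξ‖ ≤ ‖ξ - η‖ →
        ω ξ ≤ C * Real.exp (k * ‖ξ - η‖ ^ (1 / s)) * Real.exp (-1 * ‖ξ‖ ^ (1 / s))) := by
  obtain ⟨k, hk, C, hC, hmod⟩ := hω.exists_le_mul_exp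
  have hω₀ := hω.2.1
  have : 0 ≤ 1 / s := one_div_nonneg.2 hs.le
  refine ⟨max k ((k + 1) / δ ^ (1 / s)), C * max 1 (ω 0), fun ξ η => ⟨?_, fun h => ?_⟩⟩
  · refine (hmod ξ η).trans ?_
    have := hω₀ η
    gcongr
    · exact le_mul_of_one_le_right hC.le (le_max_left _ _)
    · exact le_max_left _ _
  · have hexp : (k + 1) * ‖ξ‖ ^ (1 / s) ≤
        max k ((k + 1) / δ ^ (1 / s)) * ‖ξ - η‖ ^ (1 / s) := by
      calc (k + 1) * ‖ξ‖ ^ (1 / s) = (k + 1) / δ ^ (1 / s) * (δ * ‖ξ‖) ^ (1 / s) := by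
            rw [Real.mul_rpow hδ.le (norm_nonneg ξ)]
            field_simp
        _ ≤ _ := by
            gcongr
            exact le_max_right _ _
    calc ω ξ ≤ C * Real.exp (k * ‖ξ‖ ^ (1 / s)) * ω 0 := by simpa using hmod ξ 0
      _ ≤ C * Real.exp (max k ((k + 1) / δ ^ (1 / s)) * ‖ξ - η‖ ^ (1 / s) +
          -1 * ‖ξ‖ ^ (1 / s)) * max 1 (ω 0) := by
          gcongr
          · exact (hω₀ 0).le
          · linarith
          · exact le_max_right _ _
      _ = _ := by
          rw [Real.exp_add]
          ring

theorem enorm_FT_mul_le (hψc : Continuous ψ) (hψ : Integrable ψ) (hFψ : Integrable (FT ψ))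
    (hu : Integrable u) (ξ : ℝᵈ) :
    ‖FT (ψ * u) ξ‖ₑ ≤ ‖ftConst d‖ₑ * ∫⁻ η, ‖FT ψ η‖ₑ * ‖FT u (-η + ξ)‖ₑ := by
  rw [FT_mul hψc hψ hFψ hu, enorm_mul]
  gcongr
  · rw [enorm_le_iff_norm_le, Complex.norm_real]
  · refine (enorm_integral_le_lintegral_enorm _).trans_eq (lintegral_congr fun η => ?_)
    rw [enorm_mul, neg_add_eq_sub]

theorem IsSAdmissible.exists_enorm_FT_mul_enorm_le (hω : IsSAdmissible s ω) (hs : 0 < s) {δ : ℝ}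
    (hδ : 0 < δ) (u : ℝᵈ → ℂ) (Γ : Set ℝᵈ) : ∃ k : ℝ, ∃ K : ℝ≥0, ∀ ξ η,
      (η ∉ Γ → δ * ‖ξ‖ ≤ ‖ξ - η‖) → ‖FT u η‖ₑ * ‖ω ξ‖ₑ ≤
        K * ‖Real.exp (k * ‖ξ - η‖ ^ (1 / s))‖ₑ *
          (Γ.indicator (fun η => ‖FT u η‖ₑ * ‖ω η‖ₑ) η +
            ‖Real.exp (-1 * ‖ξ‖ ^ (1 / s))‖ₑ) := by
  obtain ⟨k, C, hkC⟩ := hω.exists_le_mul_exp_of_le hs hδ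
  set B : ℝ := ftConst d * ∫ x, ‖u x‖
  refine ⟨k, ‖C‖₊ * max 1 ‖B‖₊, fun ξ η h => ?_⟩
  have henorm {b : ℝ} (hb : ω ξ ≤ b) : ‖ω ξ‖ₑ ≤ ‖b‖ₑ := by
    rw [enorm_le_iff_norm_le, Real.norm_of_nonneg (hω.2.1 ξ).le]
    exact hb.trans (le_abs_self b)
  have hC : ‖C‖ₑ ≤ (‖C‖₊ * max 1 ‖B‖₊ : ℝ≥0) :=
    ENNReal.coe_le_coe.2 (le_mul_of_one_le_right' (le_max_left _ _))
  by_cases hη : η ∈ Γ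
  · have hω' := henorm (hkC ξ η).1
    rw [enorm_mul, enorm_mul] at hω'
    rw [indicator_of_mem hη, mul_comm ‖FT u η‖ₑ ‖ω η‖ₑ, mul_comm ‖FT u η‖ₑ ‖ω ξ‖ₑ]
    calc ‖ω ξ‖ₑ * ‖FT u η‖ₑ ≤
          ‖C‖ₑ * ‖Real.exp (k * ‖ξ - η‖ ^ (1 / s))‖ₑ * ‖ω η‖ₑ * ‖FT u η‖ₑ := by gcongr
      _ ≤ _ := by
        rw [mul_assoc (‖C‖ₑ * _)]
        gcongr
        exact le_self_add
  · have hω' := henorm ((hkC ξ η).2 (h hη))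
    have hu : ‖FT u η‖ₑ ≤ ‖B‖ₑ :=
      enorm_le_iff_norm_le.2 ((norm_FT_le u η).trans (le_abs_self B))
    have hCB : ‖C‖ₑ * ‖B‖ₑ ≤ (‖C‖₊ * max 1 ‖B‖₊ : ℝ≥0) :=
      ENNReal.coe_le_coe.2 (mul_le_mul_right (le_max_right _ _) _)
    rw [enorm_mul, enorm_mul] at hω'
    rw [indicator_of_notMem hη, zero_add]
    calc ‖FT u η‖ₑ * ‖ω ξ‖ₑ ≤ ‖B‖ₑ * (‖C‖ₑ * ‖Real.exp (k * ‖ξ - η‖ ^ (1 / s))‖ₑ *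
          ‖Real.exp (-1 * ‖ξ‖ ^ (1 / s))‖ₑ) := by gcongr
      _ = ‖C‖ₑ * ‖B‖ₑ * ‖Real.exp (k * ‖ξ - η‖ ^ (1 / s))‖ₑ *
          ‖Real.exp (-1 * ‖ξ‖ ^ (1 / s))‖ₑ := by ring
      _ ≤ _ := by gcongr

theorem IsSCutoff.lintegral_enorm_FT_mul_exp_ne_top (hψ : IsSCutoff s ψ) (hs : 0 < s) (k : ℝ) :
    ∫⁻ η, ‖FT ψ η‖ₑ * ‖Real.exp (k * ‖η‖ ^ (1 / s))‖ₑ ≠ ∞ := by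
  have := (hψ.integrable_norm_FT_mul_exp hs k).2.ne
  simpa only [HasFiniteIntegral, enorm_mul, enorm_norm] using this

theorem enorm_FT_mul_mul_le_lconvolution_add (hψc : Continuous ψ) (hψ : Integrable ψ)
    (hFψ : Integrable (FT ψ)) (hu : Integrable u) {W H : ℝᵈ → ℝ≥0∞} (hW : Measurable W)
    {K : ℝ≥0} {c e : ℝ≥0∞} (hc : c ≠ ∞) {ξ : ℝᵈ}
    (h : ∀ η, ‖FT u η‖ₑ * c ≤ K * W (ξ - η) * (H η + e)) :
    ‖FT (ψ * u) ξ‖ₑ * c ≤ ‖ftConst d‖ₑ * K *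
      (((fun η => ‖FT ψ η‖ₑ * W η) ⋆ₗ H) ξ + (∫⁻ η, ‖FT ψ η‖ₑ * W η) * e) := by
  have hG : Measurable fun η => ‖FT ψ η‖ₑ * W η := (continuous_FT hψ).measurable.enorm.mul hW
  have hker (η : ℝᵈ) : ‖FT ψ η‖ₑ * ‖FT u (-η + ξ)‖ₑ * c ≤
      K * (‖FT ψ η‖ₑ * W η * H (-η + ξ) + ‖FT ψ η‖ₑ * W η * e) := by
    have hη := h (-η + ξ)
    rw [show ξ - (-η + ξ) = η by abel] at hη
    calc _ ≤ ‖FT ψ η‖ₑ * (K * W η * (H (-η + ξ) + e)) := by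
          rw [mul_assoc]
          gcongr
      _ = _ := by ring
  calc ‖FT (ψ * u) ξ‖ₑ * c
      ≤ ‖ftConst d‖ₑ * ∫⁻ η, ‖FT ψ η‖ₑ * ‖FT u (-η + ξ)‖ₑ * c := by
        rw [lintegral_mul_const' _ _ hc, ← mul_assoc]
        gcongr
        exact enorm_FT_mul_le hψc hψ hFψ hu ξ
    _ ≤ ‖ftConst d‖ₑ * ∫⁻ η, K * (‖FT ψ η‖ₑ * W η * H (-η + ξ) + ‖FT ψ η‖ₑ * W η * e) := by
        gcongr ‖ftConst d‖ₑ * ?_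
        exact lintegral_mono hker
    _ = _ := by
        rw [lintegral_const_mul' _ _ ENNReal.coe_ne_top, lintegral_add_right _ (hG.mul_const e),
          lintegral_mul_const _ hG, mul_assoc]
        rfl

theorem IsSCutoff.exists_enorm_FT_mul_mul_enorm_le (hψ : IsSCutoff s ψ) (hs : 0 < s)
    (hω : IsSAdmissible s ω) (hu : Integrable u) (Γ : Set ℝᵈ) {δ : ℝ} (hδ : 0 < δ) :
    ∃ G : ℝᵈ → ℝ≥0∞, Measurable G ∧ ∫⁻ η, G η ≠ ∞ ∧ ∃ K : ℝ≥0, ∀ ξ,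
      (∀ η ∉ Γ, δ * ‖ξ‖ ≤ ‖ξ - η‖) → ‖FT (ψ * u) ξ‖ₑ * ‖ω ξ‖ₑ ≤
        K * ((G ⋆ₗ Γ.indicator fun η => ‖FT u η‖ₑ * ‖ω η‖ₑ) ξ +
          ‖Real.exp (-1 * ‖ξ‖ ^ (1 / s))‖ₑ) := by
  obtain ⟨k, K, hK⟩ := hω.exists_enorm_FT_mul_enorm_le hs hδ u Γ
  set H : ℝᵈ → ℝ≥0∞ := Γ.indicator fun η => ‖FT u η‖ₑ * ‖ω η‖ₑ
  set W : ℝᵈ → ℝ≥0∞ := fun η => ‖Real.exp (k * ‖η‖ ^ (1 / s))‖ₑ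
  set G : ℝᵈ → ℝ≥0∞ := fun η => ‖FT ψ η‖ₑ * W η
  have hW : Measurable W :=
    (continuous_exp_mul_norm_rpow (one_div_nonneg.2 hs.le) k).measurable.enorm
  have hG : Measurable G := (continuous_FT hψ.integrable).measurable.enorm.mul hW
  have hGint : ∫⁻ η, G η ≠ ∞ := hψ.lintegral_enorm_FT_mul_exp_ne_top hs k
  lift ∫⁻ η, G η to ℝ≥0 using hGint with I hI
  refine ⟨G, hG, hI ▸ ENNReal.coe_ne_top, ‖ftConst d‖₊ * K * max 1 I, fun ξ hξ => ?_⟩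
  set e : ℝ≥0∞ := ‖Real.exp (-1 * ‖ξ‖ ^ (1 / s))‖ₑ
  calc ‖FT (ψ * u) ξ‖ₑ * ‖ω ξ‖ₑ
      ≤ ‖ftConst d‖ₑ * K * ((G ⋆ₗ H) ξ + I * e) := by
        rw [hI]
        exact enorm_FT_mul_mul_le_lconvolution_add hψ.1.continuous hψ.integrable
          (hψ.integrable_FT hs) hu hW enorm_ne_top fun η => hK ξ η (hξ η)
    _ ≤ ‖ftConst d‖ₑ * K * ((max 1 I : ℝ≥0) * ((G ⋆ₗ H) ξ + e)) := by
        rw [mul_add ((max 1 I : ℝ≥0) : ℝ≥0∞)]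
        gcongr
        · exact le_mul_of_one_le_left' (by exact_mod_cast le_max_left 1 I)
        · exact le_max_right 1 I
    _ = _ := by
        rw [ENNReal.coe_mul, ENNReal.coe_mul, mul_assoc _ ((max 1 I : ℝ≥0) : ℝ≥0∞)]
        rfl

theorem IsSCutoff.FLSemi_mul_lt_top (hψ : IsSCutoff s ψ) (hs : 0 < s) (hω : IsSAdmissible s ω)
    (hq : 1 ≤ q) (hu : Integrable u) (hΓ : MeasurableSet Γ) (hS : MeasurableSet S) {δ : ℝ}
    (hδ : 0 < δ) (hSΓ : ∀ ξ ∈ S, ∀ η ∉ Γ, δ * ‖ξ‖ ≤ ‖ξ - η‖) (huΓ : FLSemi ω q u Γ < ∞) :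
    FLSemi ω q (ψ * u) S < ∞ := by
  obtain ⟨G, hG, hGint, K, hK⟩ := hψ.exists_enorm_FT_mul_mul_enorm_le hs hω hu Γ hδ
  set H : ℝᵈ → ℝ≥0∞ := Γ.indicator fun η => ‖FT u η‖ₑ * ‖ω η‖ₑ
  have hH : Measurable H := ((continuous_FT hu).measurable.enorm.mul hω.1.enorm).indicator hΓ
  have hHq : eLpNorm H q volume < ∞ := by
    rwa [eLpNorm_indicator_eq_eLpNorm_restrict hΓ, ← FLSemi_eq]
  have he := (memLp_exp_neg_mul_norm_rpow (volume : Measure ℝᵈ) (one_div_pos.2 hs) one_pos hq).enorm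
  have hGH : MemLp (G ⋆ₗ H) q volume :=
    ⟨(measurable_lconvolution volume hG hH).aestronglyMeasurable,
      (eLpNorm_lconvolution_le hG hH hq).trans_lt (ENNReal.mul_lt_top hGint.lt_top hHq)⟩
  rw [FLSemi_eq]
  refine (eLpNorm_le_nnreal_smul_eLpNorm_of_ae_le_mul'
    (c := K) (g := (G ⋆ₗ H) + fun ξ => ‖Real.exp (-1 * ‖ξ‖ ^ (1 / s))‖ₑ)
    (ae_restrict_of_forall_mem hS fun ξ hξ => ?_) q).trans_lt ?_
  · simpa only [enorm_eq_self, Pi.add_apply] using hK ξ (hSΓ ξ hξ)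
  · exact ENNReal.mul_lt_top ENNReal.coe_lt_top
      ((hGH.add he).mono_measure Measure.restrict_le_self).eLpNorm_lt_top

end FourierLebesgue

theorem eLpNorm_add_measure_le {α : Type*} {mα : MeasurableSpace α} {μ ν : Measure α}
    (f : α → ℝ≥0∞) {q : ℝ≥0∞} (hq : 1 ≤ q) :
    eLpNorm f q (μ + ν) ≤ eLpNorm f q μ + eLpNorm f q ν := by
  rcases eq_or_ne q ∞ with rfl | hq_top
  · refine eLpNormEssSup_le_of_ae_enorm_bound (ae_add_measure_iff.2 ⟨?_, ?_⟩)
    · exact (ae_le_eLpNormEssSup (f := f)).mono fun x hx => hx.trans le_self_add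
    · exact (ae_le_eLpNormEssSup (f := f)).mono fun x hx => hx.trans le_add_self
  · have hq₀ : q ≠ 0 := (zero_lt_one.trans_le hq).ne'
    have hq₁ : 1 ≤ q.toReal := by
      simpa using ENNReal.toReal_mono hq_top hq
    simp only [eLpNorm_eq_lintegral_rpow_enorm_toReal hq₀ hq_top, lintegral_add_measure]
    exact ENNReal.rpow_add_le_add_rpow _ _ (by positivity) ((div_le_one (by positivity)).2 hq₁)

section FourierLebesgueAlgebra

variable {s : ℝ} {q : ℝ≥0∞} {ω : EuclideanSpace ℝ (Fin d) → ℝ}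
  {f g ψ : EuclideanSpace ℝ (Fin d) → ℂ} {S T : Set (EuclideanSpace ℝ (Fin d))}

theorem FLSemi_mono (hST : S ⊆ T) : FLSemi ω q f S ≤ FLSemi ω q f T :=
  eLpNorm_mono_measure _ (Measure.restrict_mono_set volume hST)

theorem FLSemi_union_le (hq : 1 ≤ q) :
    FLSemi ω q f (S ∪ T) ≤ FLSemi ω q f S + FLSemi ω q f T := by
  simp only [FLSemi_eq]
  exact (eLpNorm_mono_measure _ (Measure.restrict_union_le S T)).trans
    (eLpNorm_add_measure_le _ hq)

theorem FLSemi_add_le (hω : Measurable ω) (hq : 1 ≤ q) (hf : Integrable f) (hg : Integrable g) :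
    FLSemi ω q (f + g) S ≤ FLSemi ω q f S + FLSemi ω q g S := by
  have hmeas {u : ℝᵈ → ℂ} (hu : Integrable u) :
      AEStronglyMeasurable (fun ξ => ‖FT u ξ‖ₑ * ‖ω ξ‖ₑ) (volume.restrict S) :=
    ((continuous_FT hu).measurable.enorm.mul hω.enorm).aestronglyMeasurable
  simp only [FLSemi_eq]
  refine (eLpNorm_mono_enorm fun ξ => ?_).trans (eLpNorm_add_le (hmeas hf) (hmeas hg) hq)
  simp only [enorm_eq_self, FT_add hf hg, Pi.add_apply, ← add_mul]
  gcongr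
  exact enorm_add_le _ _

theorem IsSCutoff.integrable_mul (hψ : IsSCutoff s ψ) (hf : Integrable f) :
    Integrable (ψ * f) := by
  obtain ⟨C, hC⟩ := hψ.1.continuous.bounded_above_of_compact_support hψ.2.1
  exact hf.bdd_mul hψ.1.continuous.aestronglyMeasurable (Eventually.of_forall hC)

end FourierLebesgueAlgebra

section Microlocal

variable {s : ℝ} {q : ℝ≥0∞} {ω : EuclideanSpace ℝ (Fin d) → ℝ}
  {f φ χ : EuclideanSpace ℝ (Fin d) → ℂ} {x₀ ξ₀ : EuclideanSpace ℝ (Fin d)}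
  {S T Γ : Set (EuclideanSpace ℝ (Fin d))}

/-- `f` is *microlocally regular* at `x₀` in the frequencies of `S`: it has a localization `Φ f`
near `x₀` whose Fourier–Lebesgue seminorm over `S` is finite. Finiteness is required to survive any
further multiplication by a cutoff, so that localizations regular over different sets can be
multiplied together. -/
def IsMicroregularAt (s : ℝ) (q : ℝ≥0∞) (ω : ℝᵈ → ℝ) (f : ℝᵈ → ℂ) (x₀ : ℝᵈ) (S : Set ℝᵈ) : Prop :=
  ∃ Φ, IsSCutoff s Φ ∧ Φ x₀ ≠ 0 ∧ ∀ ψ, IsSCutoff s ψ → FLSemi ω q (ψ * (Φ * f)) S < ∞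

theorem IsMicroregularAt.mono (h : IsMicroregularAt s q ω f x₀ T) (hST : S ⊆ T) :
    IsMicroregularAt s q ω f x₀ S := by
  obtain ⟨Φ, hΦ, hΦ₀, hΦT⟩ := h
  exact ⟨Φ, hΦ, hΦ₀, fun ψ hψ => (FLSemi_mono hST).trans_lt (hΦT ψ hψ)⟩

theorem IsMicroregularAt.union (hs : 1 < s) (hq : 1 ≤ q) (hS : IsMicroregularAt s q ω f x₀ S)
    (hT : IsMicroregularAt s q ω f x₀ T) : IsMicroregularAt s q ω f x₀ (S ∪ T) := by
  obtain ⟨Φ, hΦ, hΦ₀, hΦS⟩ := hS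
  obtain ⟨Ψ, hΨ, hΨ₀, hΨT⟩ := hT
  refine ⟨Φ * Ψ, hΦ.mul hs hΨ, mul_ne_zero hΦ₀ hΨ₀, fun ψ hψ =>
    (FLSemi_union_le hq).trans_lt (ENNReal.add_lt_top.2 ⟨?_, ?_⟩)⟩
  · rw [show ψ * (Φ * Ψ * f) = ψ * Ψ * (Φ * f) by ring]
    exact hΦS _ (hψ.mul hs hΨ)
  · rw [show ψ * (Φ * Ψ * f) = ψ * Φ * (Ψ * f) by ring]
    exact hΨT _ (hψ.mul hs hΦ)

theorem exists_isSCutoff_apply_ne_zero (hs : 1 < s) (x₀ : ℝᵈ) :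
    ∃ χ : ℝᵈ → ℂ, IsSCutoff s χ ∧ χ x₀ ≠ 0 := by
  obtain ⟨χ, hχ, hχ₁⟩ := exists_isSCutoff_eq_one (d := d) hs
  exact ⟨_, hχ.comp_sub x₀, by simp [hχ₁]⟩

theorem isMicroregularAt_singleton_zero (hs : 1 < s) (hω : IsSAdmissible s ω) (hq : 1 ≤ q)
    (hf : Integrable f) (x₀ : ℝᵈ) : IsMicroregularAt s q ω f x₀ {0} := by
  obtain ⟨Φ, hΦ, hΦ₀⟩ := exists_isSCutoff_apply_ne_zero hs x₀
  refine ⟨Φ, hΦ, hΦ₀, fun ψ hψ => ?_⟩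
  refine hψ.FLSemi_mul_lt_top (zero_lt_one.trans hs) hω hq (hΦ.integrable_mul hf) .empty
    (measurableSet_singleton 0) one_pos ?_ (by simp [FLSemi])
  rintro _ rfl η -
  simp

theorem IsCone.mul_norm_le_norm_sub (hΓ : IsCone Γ) {r : ℝ} (hr : Metric.ball ξ₀ (2 * r) ⊆ Γ)
    {ξ η : ℝᵈ} (hξ : ‖ξ‖⁻¹ • ξ ∈ Metric.ball ξ₀ r) (hη : η ∉ Γ) : r * ‖ξ‖ ≤ ‖ξ - η‖ := by
  rcases eq_or_ne ξ 0 with rfl | hξ₀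
  · simp
  have hpos : 0 < ‖ξ‖ := norm_pos_iff.2 hξ₀
  have hη' : ‖ξ‖⁻¹ • η ∉ Metric.ball ξ₀ (2 * r) := fun h =>
    hη <| by simpa [smul_inv_smul₀ hpos.ne'] using hΓ.2 _ (hr h) _ hpos
  rw [Metric.mem_ball, not_lt] at hη'
  have hle : r ≤ dist (‖ξ‖⁻¹ • ξ) (‖ξ‖⁻¹ • η) := by
    linarith [dist_triangle_left (‖ξ‖⁻¹ • η) ξ₀ (‖ξ‖⁻¹ • ξ), Metric.mem_ball.1 hξ]
  rwa [dist_smul₀, norm_inv, norm_norm, dist_eq_norm, inv_mul_eq_div, le_div_iff₀ hpos] at hle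

theorem exists_mem_nhds_isMicroregularAt (hs : 0 < s) (hω : IsSAdmissible s ω) (hq : 1 ≤ q)
    (hf : Integrable f) (hφ : IsSCutoff s φ) (hφ₀ : φ x₀ ≠ 0) (hΓo : IsOpen Γ) (hΓ : IsCone Γ)
    (hξ₀ : ξ₀ ∈ Γ) (hφΓ : FLSemi ω q (φ * f) Γ < ∞) :
    ∃ V ∈ 𝓝 ξ₀, IsMicroregularAt s q ω f x₀ ((fun ξ => ‖ξ‖⁻¹ • ξ) ⁻¹' V) := by
  obtain ⟨r, hr₀, hr⟩ := Metric.isOpen_iff.1 hΓo ξ₀ hξ₀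
  have hr' : Metric.ball ξ₀ (2 * (r / 2)) ⊆ Γ := by rwa [mul_div_cancel₀ r two_ne_zero]
  refine ⟨Metric.ball ξ₀ (r / 2), Metric.ball_mem_nhds ξ₀ (half_pos hr₀), φ, hφ, hφ₀, fun ψ hψ =>
    hψ.FLSemi_mul_lt_top hs hω hq (hφ.integrable_mul hf) hΓo.measurableSet ?_ (half_pos hr₀)
      (fun ξ hξ η hη => hΓ.mul_norm_le_norm_sub hr' hξ hη) hφΓ⟩
  exact (measurable_norm.inv.smul measurable_id) Metric.isOpen_ball.measurableSet

theorem isMicroregularAt_univ (hs : 1 < s) (hω : IsSAdmissible s ω) (hq : 1 ≤ q)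
    (hf : Integrable f) (hreg : ∀ ξ, (x₀, ξ) ∉ WF_FL s q ω f) :
    IsMicroregularAt s q ω f x₀ univ := by
  have h₀ := isMicroregularAt_singleton_zero hs hω hq hf x₀
  have hsphere : IsMicroregularAt s q ω f x₀
      ((fun ξ => ‖ξ‖⁻¹ • ξ) ⁻¹' Metric.sphere (0 : ℝᵈ) 1) := by
    refine (isCompact_sphere (0 : ℝᵈ) 1).induction_on
      (p := fun V => IsMicroregularAt s q ω f x₀ ((fun ξ => ‖ξ‖⁻¹ • ξ) ⁻¹' V))
      (h₀.mono (empty_subset _)) (fun V W hVW hW => hW.mono (preimage_mono hVW))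
      (fun V W hV hW => hV.union hs hq hW) fun ξ₀ hξ₀ => ?_
    have hne : ξ₀ ≠ 0 := ne_zero_of_mem_unit_sphere ⟨ξ₀, hξ₀⟩
    have hξ₀' := hreg ξ₀
    simp only [WF_FL, mem_ofPred_eq, not_and, not_forall] at hξ₀'
    obtain ⟨φ, hφ, hφ₀, Γ, hΓo, hΓ, hξΓ, hfin⟩ := hξ₀' hne
    obtain ⟨V, hV, hVreg⟩ := exists_mem_nhds_isMicroregularAt (zero_lt_one.trans hs) hω hq hf hφ
      hφ₀ hΓo hΓ hξΓ (lt_top_iff_ne_top.2 hfin)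
    exact ⟨V, mem_nhdsWithin_of_mem_nhds hV, hVreg⟩
  refine (hsphere.union hs hq h₀).mono fun ξ _ => ?_
  rcases eq_or_ne ξ 0 with rfl | hξ
  · exact Or.inr rfl
  · exact Or.inl (by simp [norm_smul, hξ])

theorem exists_eventuallyEq_one_FLSemi_mul_lt_top (hs : 1 < s) (hω : IsSAdmissible s ω)
    (hq : 1 ≤ q) (hf : Integrable f) (hreg : ∀ ξ, (x₀, ξ) ∉ WF_FL s q ω f) :
    ∃ θ, IsSCutoff s θ ∧ θ =ᶠ[𝓝 x₀] 1 ∧ FLSemi ω q (θ * f) univ < ∞ := by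
  obtain ⟨Φ, hΦ, hΦ₀, hfin⟩ := isMicroregularAt_univ hs hω hq hf hreg
  obtain ⟨ψ, hψ, hψΦ⟩ := hΦ.exists_mul_eventuallyEq_one hs hΦ₀
  exact ⟨ψ * Φ, hψ.mul hs hΦ, hψΦ, mul_assoc ψ Φ f ▸ hfin ψ hψ⟩

theorem IsSCutoff.FLSemi_mul_univ_lt_top (hφ : IsSCutoff s φ) (hs : 0 < s)
    (hω : IsSAdmissible s ω) (hq : 1 ≤ q) (hf : Integrable f) (hfin : FLSemi ω q f univ < ∞) :
    FLSemi ω q (φ * f) univ < ∞ :=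
  hφ.FLSemi_mul_lt_top hs hω hq hf .univ .univ one_pos (fun _ _ _ h => (h trivial).elim) hfin

theorem FLSemi_add_sub_mul_mul_lt_top (hs : 0 < s) (hω : IsSAdmissible s ω) (hq : 1 ≤ q)
    (hf : Integrable f) (hφ : IsSCutoff s φ) (hχ : IsSCutoff s χ)
    (hφf : FLSemi ω q (φ * f) univ < ∞) (hχf : FLSemi ω q (χ * f) univ < ∞) :
    FLSemi ω q ((φ + χ - φ * χ) * f) univ < ∞ := by
  have hχi := hχ.integrable_mul hf
  have hφ' : IsSCutoff s ((-1 : ℂ) • φ) := hφ.smul (-1)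
  have hφχi := hφ'.integrable_mul hχi
  have heq : (φ + χ - φ * χ) * f = φ * f + (χ * f + (-1 : ℂ) • φ * (χ * f)) := by
    rw [neg_one_smul]
    ring
  rw [heq]
  refine (FLSemi_add_le hω.1 hq (hφ.integrable_mul hf) (hχi.add hφχi)).trans_lt
    (ENNReal.add_lt_top.2 ⟨hφf, ?_⟩)
  exact (FLSemi_add_le hω.1 hq hχi hφχi).trans_lt
    (ENNReal.add_lt_top.2 ⟨hχf, hφ'.FLSemi_mul_univ_lt_top hs hω hq hχi hχf⟩)

theorem FLSemi_univ_lt_top_of_forall_exists_eventuallyEq_one (hs : 1 < s)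
    (hω : IsSAdmissible s ω) (hq : 1 ≤ q) (hf : Integrable f) (hfc : HasCompactSupport f)
    (hloc : ∀ x, ∃ θ, IsSCutoff s θ ∧ θ =ᶠ[𝓝 x] 1 ∧ FLSemi ω q (θ * f) univ < ∞) :
    FLSemi ω q f univ < ∞ := by
  obtain ⟨θ, -, hθ₁, hθf⟩ : ∃ θ, IsSCutoff s θ ∧ EqOn θ 1 (tsupport f) ∧
      FLSemi ω q (θ * f) univ < ∞ := by
    refine hfc.isCompact.induction_on
      (p := fun K => ∃ θ, IsSCutoff s θ ∧ EqOn θ 1 K ∧ FLSemi ω q (θ * f) univ < ∞) ?_ ?_ ?_ ?_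
    · obtain ⟨θ, hθ, -, hθf⟩ := hloc 0
      exact ⟨θ, hθ, eqOn_empty θ 1, hθf⟩
    · rintro K L hKL ⟨θ, hθ, hθ₁, hθf⟩
      exact ⟨θ, hθ, hθ₁.mono hKL, hθf⟩
    · rintro K L ⟨θ, hθ, hθ₁, hθf⟩ ⟨χ, hχ, hχ₁, hχf⟩
      refine ⟨θ + χ - θ * χ, (hθ.add hχ).sub (hθ.mul hs hχ), ?_,
        FLSemi_add_sub_mul_mul_lt_top (zero_lt_one.trans hs) hω hq hf hθ hχ hθf hχf⟩
      rintro x (hx | hx)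
      · simp [hθ₁ hx]
      · simp [hχ₁ hx]
    · intro x _
      obtain ⟨θ, hθ, hθ₁, hθf⟩ := hloc x
      exact ⟨_, mem_nhdsWithin_of_mem_nhds hθ₁, θ, hθ, fun _ h => h, hθf⟩
  have hθf' : θ * f = f := by
    ext x
    by_cases hx : x ∈ tsupport f
    · simp [hθ₁ hx]
    · simp [image_eq_zero_of_notMem_tsupport hx]
  rwa [hθf'] at hθf

end Microlocal

theorem isCone_compl_zero : IsCone ({0}ᶜ : Set ℝᵈ) :=
  ⟨fun h => h rfl, fun _ hξ _ ht => smul_ne_zero ht.ne' hξ⟩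

theorem stmt16 {d : ℕ} (s : ℝ) (hs : 1 < s) (q : ℝ≥0∞) (hq : 1 ≤ q)
    (ω : EuclideanSpace ℝ (Fin d) → ℝ) (hω : IsSAdmissible s ω)
    (f : EuclideanSpace ℝ (Fin d) → ℂ) (hf : Integrable f) (hfc : HasCompactSupport f) :
    eLpNorm (fun ξ => ‖FT f ξ‖ * ω ξ) q volume < ∞ ↔ WF_FL s q ω f = ∅ := by
  have hs₀ : 0 < s := zero_lt_one.trans hs
  have hnorm : eLpNorm (fun ξ => ‖FT f ξ‖ * ω ξ) q volume = FLSemi ω q f univ := by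
    rw [FLSemi, Measure.restrict_univ]
  rw [hnorm, eq_empty_iff_forall_notMem]
  constructor
  · rintro hfin ⟨x₀, ξ₀⟩ ⟨hξ₀, hWF⟩
    obtain ⟨χ, hχ, hχ₀⟩ := exists_isSCutoff_apply_ne_zero hs x₀
    have hχf : FLSemi ω q (χ * f) {0}ᶜ < ∞ :=
      (FLSemi_mono (subset_univ _)).trans_lt (hχ.FLSemi_mul_univ_lt_top hs₀ hω hq hf hfin)
    exact hχf.ne (hWF χ hχ hχ₀ _ isOpen_compl_singleton isCone_compl_zero hξ₀)
  · intro hWF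
    exact FLSemi_univ_lt_top_of_forall_exists_eventuallyEq_one hs hω hq hf hfc fun x₀ =>
      exists_eventuallyEq_one_FLSemi_mul_lt_top hs hω hq hf fun ξ => hWF (x₀, ξ)

end Paper
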